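/- arXiv:1207.6128 — 11 statements merged into one kernel-verified Lean document; each statement's English description precedes it below -/
import Mathlib

section
/- Let P ⊆ ℝⁿ be a convex body containing 0 in its interior and let g : ℝⁿ → (0,∞) be a smooth positive function. If φ : ℝⁿ → ℝ is a smooth convex function satisfying g(∇φ(x))·det D²φ(x) = e^{−φ(x)} for all x ∈ ℝⁿ and such that ∇φ is a diffeomorphism from ℝⁿ onto the interior of P, then 0 is the barycenter of the measure g(p)dp on P, i.e. ∫_P p·g(p) dp = 0 as a vector in ℝⁿ. -/
open scoped RealInnerProductSpace
open MeasureTheory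

/-- The determinant of the Hessian matrix `(∂²φ/∂x_i∂x_j)(x)`. -/
noncomputable def hessDet {n : ℕ} (φ : EuclideanSpace ℝ (Fin n) → ℝ)
    (x : EuclideanSpace ℝ (Fin n)) : ℝ :=
  Matrix.det (Matrix.of fun i j : Fin n =>
    iteratedFDeriv ℝ 2 φ x ![EuclideanSpace.single i 1, EuclideanSpace.single j 1])

/-- The gradient map of `φ` is a diffeomorphism from `ℝⁿ` onto `S`: a smooth
bijection onto `S` with smooth inverse. -/
def IsGradDiffeoOnto {n : ℕ} (φ : EuclideanSpace ℝ (Fin n) → ℝ)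
    (S : Set (EuclideanSpace ℝ (Fin n))) : Prop :=
  ContDiff ℝ (⊤ : ℕ∞) (gradient φ) ∧
  Function.Injective (gradient φ) ∧
  Set.range (gradient φ) = S ∧
  ∃ ψ : EuclideanSpace ℝ (Fin n) → EuclideanSpace ℝ (Fin n),
    ContDiffOn ℝ (⊤ : ℕ∞) ψ S ∧ ∀ x, ψ (gradient φ x) = x

theorem grad_inner {n : ℕ} (φ : EuclideanSpace ℝ (Fin n) → ℝ) (x v : EuclideanSpace ℝ (Fin n)) :
    inner ℝ (gradient φ x) v = fderiv ℝ φ x v := by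
  unfold gradient
  exact InnerProductSpace.toDual_symm_apply

theorem det_grad {n : ℕ} (φ : EuclideanSpace ℝ (Fin n) → ℝ)
    (hφ : ContDiff ℝ (⊤ : ℕ∞) φ) (hG : ContDiff ℝ (⊤ : ℕ∞) (gradient φ))
    (x : EuclideanSpace ℝ (Fin n)) :
    (fderiv ℝ (gradient φ) x).det = hessDet φ x := by
  have hGd : DifferentiableAt ℝ (gradient φ) x := (hG.differentiable (by simp)) x
  have hd : DifferentiableAt ℝ (fderiv ℝ φ) x :=
    ((hφ.fderiv_right (m := (⊤ : ℕ∞)) (by simp)).differentiable (by simp)) x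
  have key : ∀ u v, inner ℝ (fderiv ℝ (gradient φ) x u) v = fderiv ℝ (fderiv ℝ φ) x u v := by
    intro u v
    have h1 : HasFDerivAt (fun y => innerSL ℝ v (gradient φ y))
        ((innerSL ℝ v).comp (fderiv ℝ (gradient φ) x)) x :=
      (innerSL ℝ v).hasFDerivAt.comp x hGd.hasFDerivAt
    have h2 : HasFDerivAt (fun y => fderiv ℝ φ y v)
        ((ContinuousLinearMap.apply ℝ ℝ v).comp (fderiv ℝ (fderiv ℝ φ) x)) x :=
      (ContinuousLinearMap.apply ℝ ℝ v).hasFDerivAt.comp x hd.hasFDerivAt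
    have he : (fun y => innerSL ℝ v (gradient φ y)) = fun y => fderiv ℝ φ y v := by
      funext y
      rw [innerSL_apply_apply, real_inner_comm, grad_inner]
    rw [he] at h1
    have := congrArg (fun L => L u) (h1.unique h2)
    simpa [real_inner_comm] using this
  unfold hessDet
  rw [ContinuousLinearMap.det,
    ← LinearMap.det_toMatrix (EuclideanSpace.basisFun (Fin n) ℝ).toBasis, ← Matrix.det_transpose]
  congr 1
  ext i j
  rw [Matrix.transpose_apply, LinearMap.toMatrix_apply, Matrix.of_apply, iteratedFDeriv_two_apply]
  have := key (EuclideanSpace.single i 1) (EuclideanSpace.single j 1)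
  simpa [EuclideanSpace.inner_single_right] using this

/-- If `φ` is a smooth convex solution of
`g(∇φ) det D²φ = e^{-φ}` whose gradient is a diffeomorphism onto the interior
of the convex body `P`, then `0` is the barycenter of the measure `g(p)dp`
on `P`. -/
theorem statement1 {n : ℕ} (P : Set (EuclideanSpace ℝ (Fin n)))
    (hPcomp : IsCompact P) (hPconv : Convex ℝ P)
    (h0 : (0 : EuclideanSpace ℝ (Fin n)) ∈ interior P)
    (g : EuclideanSpace ℝ (Fin n) → ℝ)
    (hg : ContDiff ℝ (⊤ : ℕ∞) g) (hgpos : ∀ p, 0 < g p)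
    (φ : EuclideanSpace ℝ (Fin n) → ℝ)
    (hφsm : ContDiff ℝ (⊤ : ℕ∞) φ) (hφconv : ConvexOn ℝ Set.univ φ)
    (hMA : ∀ x, g (gradient φ x) * hessDet φ x = Real.exp (-φ x))
    (hdiffeo : IsGradDiffeoOnto φ (interior P)) :
    (∫ p in P, g p • p) = 0 := by
  obtain ⟨hG, hinj, hrange, -⟩ := hdiffeo
  have hfr : interior P =ᵐ[volume] P :=
    interior_ae_eq_of_null_frontier (hPconv.addHaar_frontier volume)
  have hdetpos : ∀ x, 0 < hessDet φ x := fun x => by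
    have h := Real.exp_pos (-φ x)
    rw [← hMA x] at h
    exact pos_of_mul_pos_right h (hgpos _).le
  have hfd : ∀ x ∈ (Set.univ : Set (EuclideanSpace ℝ (Fin n))),
      HasFDerivWithinAt (gradient φ) (fderiv ℝ (gradient φ) x) Set.univ x := fun x _ =>
    ((hG.differentiable (by simp)) x).hasFDerivAt.hasFDerivWithinAt
  have himg : gradient φ '' Set.univ = interior P := by rw [Set.image_univ, hrange]
  have habs : ∀ x, |(fderiv ℝ (gradient φ) x).det| * g (gradient φ x) = Real.exp (-φ x) := by
    intro x
    rw [det_grad φ hφsm hG, abs_of_pos (hdetpos x), mul_comm, hMA]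
  have hgP : IntegrableOn g (interior P) :=
    (hg.continuous.continuousOn.integrableOn_compact hPcomp).mono_set interior_subset
  have hgpP : IntegrableOn (fun p => g p • p) (interior P) :=
    ((hg.continuous.smul continuous_id).continuousOn.integrableOn_compact hPcomp).mono_set
      interior_subset
  have hI : Integrable (fun x => Real.exp (-φ x)) := by
    rw [← himg, integrableOn_image_iff_integrableOn_abs_det_fderiv_smul volume MeasurableSet.univ
      hfd hinj.injOn, integrableOn_univ] at hgP
    simpa only [smul_eq_mul, habs] using hgP
  have hI' : Integrable (fun x => Real.exp (-φ x) • gradient φ x) := by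
    rw [← himg, integrableOn_image_iff_integrableOn_abs_det_fderiv_smul volume MeasurableSet.univ
      hfd hinj.injOn, integrableOn_univ] at hgpP
    simpa only [smul_smul, habs] using hgpP
  have hcv : (∫ p in P, g p • p) = ∫ x, Real.exp (-φ x) • gradient φ x := by
    rw [← setIntegral_congr_set hfr, ← himg,
      integral_image_eq_integral_abs_det_fderiv_smul volume MeasurableSet.univ hfd hinj.injOn,
      setIntegral_univ]
    simp only [smul_smul, habs]
  rw [hcv]
  refine ext_inner_left ℝ fun v => ?_
  rw [inner_zero_right, ← integral_inner hI' v]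
  have hder : ∀ x, HasFDerivAt (fun x => Real.exp (-φ x))
      (Real.exp (-φ x) • (-fderiv ℝ φ x)) x := fun x =>
    ((hφsm.differentiable (by simp)) x).hasFDerivAt.neg.exp
  have hfe : ∀ x, fderiv ℝ (fun x => Real.exp (-φ x)) x v
      = - inner ℝ v (Real.exp (-φ x) • gradient φ x) := by
    intro x
    rw [(hder x).fderiv, inner_smul_right, real_inner_comm, grad_inner]
    simp
  have hint : Integrable (fun x => inner ℝ v (Real.exp (-φ x) • gradient φ x)) :=
    hI'.const_inner v
  have := integral_mul_fderiv_eq_neg_fderiv_mul_of_integrable (μ := volume) (v := v)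
    (f := fun x => Real.exp (-φ x)) (g := fun _ => (1 : ℝ))
    (by simp only [hfe, mul_one]; exact hint.neg) (by simp) (by simpa using hI)
    (fun x _ => (hder x).differentiableAt) (fun x _ => differentiableAt_const _)
  simp only [hfe, mul_one, integral_neg, neg_neg] at this
  simpa using this.symm
end

section
/- Let P ⊆ ℝⁿ be a convex body containing 0 in its interior, let g : ℝⁿ → (0,∞) be a smooth positive function, and let φ : ℝⁿ → ℝ be a smooth convex function satisfying g(∇φ(x))·det D²φ(x) = e^{−φ(x)} for all x ∈ ℝⁿ with ∇φ a diffeomorphism from ℝⁿ onto the interior of P. Then: (i) the function φ(x) − φ_P(x) is globally bounded on ℝⁿ; and (ii) for every γ ∈ (0,1) the Legendre transform φ* is γ-Hölder continuous on P, i.e. there is a constant K with |φ*(p) − φ*(q)| ≤ K·‖p − q‖^γ for all p, q ∈ P. -/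
open scoped InnerProductSpace
open MeasureTheory

/-- The support function `φ_P(x) = sup_{p ∈ P} ⟨x, p⟫` of a set `P`. -/
noncomputable def suppFn {n : ℕ} (P : Set (EuclideanSpace ℝ (Fin n)))
    (x : EuclideanSpace ℝ (Fin n)) : ℝ :=
  ⨆ p : P, ⟪x, (p : EuclideanSpace ℝ (Fin n))⟫_ℝ

/-- The (real-valued) Legendre transform `φ*(p) = sup_x (⟨p, x⟩ - φ(x))`. -/
noncomputable def legendre {n : ℕ} (φ : EuclideanSpace ℝ (Fin n) → ℝ)
    (p : EuclideanSpace ℝ (Fin n)) : ℝ :=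
  ⨆ x, (⟪p, x⟫_ℝ - φ x)

/-- The Legendre transform with values in `ℝ ∪ {+∞}` (as a sup of real numbers
over a nonempty index it never takes the value `-∞`). -/
noncomputable def legendreE {n : ℕ} (φ : EuclideanSpace ℝ (Fin n) → ℝ)
    (p : EuclideanSpace ℝ (Fin n)) : EReal :=
  ⨆ x, ((⟪p, x⟫_ℝ - φ x : ℝ) : EReal)

lemma aux_grad_ineq {n : ℕ} (φ : EuclideanSpace ℝ (Fin n) → ℝ)
    (hφsm : ContDiff ℝ (⊤ : ℕ∞) φ) (hφconv : ConvexOn ℝ Set.univ φ)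
    (x y : EuclideanSpace ℝ (Fin n)) :
    ⟪gradient φ x, y⟫_ℝ - φ y ≤ ⟪gradient φ x, x⟫_ℝ - φ x := by
  have hd : DifferentiableAt ℝ φ x := (hφsm.differentiable (by simp)) x
  have hg := hd.hasGradientAt.hasFDerivAt
  have hconv : ConvexOn ℝ Set.univ (fun t : ℝ => φ (AffineMap.lineMap x y t)) := by
    have := hφconv.comp_affineMap (AffineMap.lineMap (k := ℝ) x y)
    exact this
  have hder : HasDerivAt (fun t : ℝ => φ (AffineMap.lineMap x y t)) (⟪gradient φ x, y - x⟫_ℝ) 0 := by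
    have h1 : HasDerivAt (fun t : ℝ => (AffineMap.lineMap x y t : EuclideanSpace ℝ (Fin n)))
      (y - x) 0 := AffineMap.hasDerivAt_lineMap
    have h2 : HasFDerivAt φ ((InnerProductSpace.toDual ℝ _) (gradient φ x))
      (AffineMap.lineMap x y (0:ℝ)) := by simpa using hg
    exact h2.comp_hasDerivAt (0:ℝ) h1
  have := hconv.le_slope_of_hasDerivAt (Set.mem_univ 0) (Set.mem_univ 1) one_pos hder
  rw [slope_def_field] at this
  simp only [AffineMap.lineMap_apply_zero, AffineMap.lineMap_apply_one, inner_sub_right, sub_zero, div_one] at this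
  linarith

lemma aux_det {n : ℕ} (φ : EuclideanSpace ℝ (Fin n) → ℝ)
    (hφsm : ContDiff ℝ (⊤ : ℕ∞) φ) (hgs : ContDiff ℝ (⊤ : ℕ∞) (gradient φ))
    (x : EuclideanSpace ℝ (Fin n)) :
    (fderiv ℝ (gradient φ) x).det = hessDet φ x := by
  unfold hessDet
  rw [ContinuousLinearMap.det, ← LinearMap.det_toMatrix (EuclideanSpace.basisFun (Fin n) ℝ).toBasis,
    ← Matrix.det_transpose]
  congr 1
  ext i j
  rw [Matrix.transpose_apply, LinearMap.toMatrix_apply, Matrix.of_apply, iteratedFDeriv_two_apply]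
  have hd : DifferentiableAt ℝ (gradient φ) x := hgs.differentiable (by simp) x
  have hd2 : DifferentiableAt ℝ (fderiv ℝ φ) x :=
    (contDiff_infty_iff_fderiv.1 hφsm).2.differentiable (by simp) x
  have e : (fun y => gradient φ y j) = fun y => fderiv ℝ φ y (EuclideanSpace.single j 1) := by
    funext y
    rw [← toDual_gradient, InnerProductSpace.toDual_apply_apply, EuclideanSpace.inner_single_right]
    simp
  have h1 : HasFDerivAt (fun y => gradient φ y j)
      ((EuclideanSpace.proj j : EuclideanSpace ℝ (Fin n) →L[ℝ] ℝ).comp (fderiv ℝ (gradient φ) x)) x :=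
    ((EuclideanSpace.proj j : EuclideanSpace ℝ (Fin n) →L[ℝ] ℝ).hasFDerivAt).comp x hd.hasFDerivAt
  have h2 := hd2.hasFDerivAt.clm_apply (hasFDerivAt_const (EuclideanSpace.single j (1:ℝ)) x)
  rw [e] at h1
  have h3 := congrArg (fun L => L (EuclideanSpace.single i (1:ℝ))) (h1.unique h2)
  simpa using h3

lemma aux_decay {ε : ℝ} (hε : 0 < ε) (m : ℝ) :
    ∃ A : ℝ, 0 < A ∧ ∀ y : ℝ, 0 ≤ y → Real.exp (-(ε * y)) ≤ A * (1 + y) ^ (-m) := by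
  obtain ⟨M, hM⟩ := exists_nat_ge m
  refine ⟨Real.exp ε * M.factorial / ε ^ M, by positivity, fun y hy => ?_⟩
  have h1 := Real.pow_div_factorial_le_exp (ε * (1 + y)) (by positivity) M
  have h2 : (1 + y) ^ m ≤ (1 + y) ^ M := by
    rw [← Real.rpow_natCast]; exact Real.rpow_le_rpow_of_exponent_le (by linarith) hM
  have h3 : (0:ℝ) < (1 + y) ^ m := by positivity
  rw [Real.rpow_neg (by positivity), ← div_eq_mul_inv, le_div_iff₀ h3, le_div_iff₀ (by positivity),
    mul_assoc, Real.exp_neg, inv_mul_le_iff₀ (by positivity)]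
  rw [div_le_iff₀ (by positivity), show ε * (1 + y) = ε + ε * y by ring, Real.exp_add, show ε + ε * y = ε * (1 + y) by ring] at h1
  have h4 : (1 + y) ^ m * ε ^ M ≤ (ε * (1 + y)) ^ M := by
    rw [mul_pow, mul_comm]; gcongr
  linarith

lemma aux_growth {n : ℕ} (P : Set (EuclideanSpace ℝ (Fin n)))
    (h0 : (0 : EuclideanSpace ℝ (Fin n)) ∈ interior P)
    (φ : EuclideanSpace ℝ (Fin n) → ℝ)
    (hφsm : ContDiff ℝ (⊤ : ℕ∞) φ) (hφconv : ConvexOn ℝ Set.univ φ)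
    (hdiffeo : IsGradDiffeoOnto φ (interior P)) :
    ∃ ε C : ℝ, 0 < ε ∧ ∀ x, ε * ‖x‖ - C ≤ φ x := by
  obtain ⟨-, -, hr, ψ, hψ, hψl⟩ := hdiffeo
  obtain ⟨ε, hε, hb⟩ := Metric.nhds_basis_closedBall.mem_iff.1 (mem_interior_iff_mem_nhds.1
    (by simpa using h0 : (0 : EuclideanSpace ℝ (Fin n)) ∈ interior (interior P)))
  have hc : ContinuousOn (fun p => ⟪p, ψ p⟫_ℝ - φ (ψ p)) (Metric.closedBall 0 ε) := by
    have h1 := hψ.continuousOn.mono hb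
    exact (continuousOn_id.inner h1).sub (hφsm.continuous.comp_continuousOn h1)
  obtain ⟨C, hC⟩ := (isCompact_closedBall _ _).bddAbove_image hc
  refine ⟨ε, C, hε, fun x => ?_⟩
  set p := (ε / ‖x‖) • x with hp
  have hpx : ⟪p, x⟫_ℝ = ε * ‖x‖ := by
    rw [hp, real_inner_smul_left, real_inner_self_eq_norm_sq]
    rcases eq_or_ne ‖x‖ 0 with h | h
    · simp [h]
    · field_simp
  have hpb : p ∈ Metric.closedBall (0 : EuclideanSpace ℝ (Fin n)) ε := by
    rw [mem_closedBall_zero_iff, hp, norm_smul, Real.norm_of_nonneg (by positivity)]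
    rcases eq_or_ne ‖x‖ 0 with h | h
    · simp [h, hε.le]
    · field_simp; rfl
  have hC' := hC (Set.mem_image_of_mem _ hpb)
  have : p ∈ Set.range (gradient φ) := hr ▸ hb hpb
  obtain ⟨y, hy⟩ := this
  have h := aux_grad_ineq φ hφsm hφconv y x
  have : ψ p = y := by rw [← hy]; exact hψl y
  simp only [this] at hC'
  rw [hy, hpx] at h
  linarith

lemma aux_key {n : ℕ} (P : Set (EuclideanSpace ℝ (Fin n)))
    (hPcomp : IsCompact P)
    (h0 : (0 : EuclideanSpace ℝ (Fin n)) ∈ interior P)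
    (g : EuclideanSpace ℝ (Fin n) → ℝ)
    (hg : ContDiff ℝ (⊤ : ℕ∞) g) (hgpos : ∀ p, 0 < g p)
    (φ : EuclideanSpace ℝ (Fin n) → ℝ)
    (hφsm : ContDiff ℝ (⊤ : ℕ∞) φ) (hφconv : ConvexOn ℝ Set.univ φ)
    (hMA : ∀ x, g (gradient φ x) * hessDet φ x = Real.exp (-φ x))
    (hdiffeo : IsGradDiffeoOnto φ (interior P)) (η : ℝ) (hη : 0 < η) :
    ∃ Λ : ℝ, 0 ≤ Λ ∧ ∀ (c : EuclideanSpace ℝ (Fin n)) (s : ℝ), 0 < s →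
      Metric.ball c s ⊆ interior P →
      ∃ x, gradient φ x ∈ Metric.ball c s ∧ ‖x‖ ≤ Λ * s ^ (-η) := by
  rcases Nat.eq_zero_or_pos n with hn | hn
  · subst hn
    refine ⟨0, le_rfl, fun c s hs hb => ⟨0, ?_, by simp⟩⟩
    rw [Subsingleton.elim (gradient φ 0) c]
    exact Metric.mem_ball_self hs
  obtain ⟨ε, C, hε, hgrow⟩ := aux_growth P h0 φ hφsm hφconv hdiffeo
  obtain ⟨hgs, hinj, hr, -⟩ := hdiffeo
  have hn' : (0:ℝ) < n := by exact_mod_cast hn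
  set m : ℝ := n / η with hm
  have hmpos : 0 < m := by positivity
  obtain ⟨A, hA, hdecay⟩ := aux_decay hε (m + (n + 1))
  obtain ⟨p₀, hp₀, hmin⟩ := hPcomp.exists_isMinOn ⟨0, interior_subset h0⟩ hg.continuous.continuousOn
  set c₀ := g p₀ with hc₀
  have hc₀pos : 0 < c₀ := hgpos _
  set B := c₀⁻¹ * (Real.exp C * A) with hB
  have hBpos : 0 < B := by positivity
  have hI : (∫⁻ x : EuclideanSpace ℝ (Fin n), ENNReal.ofReal ((1 + ‖x‖) ^ (-((n:ℝ) + 1)))) < ⊤ :=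
    finite_integral_one_add_norm (by simp)
  set I := ∫⁻ x : EuclideanSpace ℝ (Fin n), ENNReal.ofReal ((1 + ‖x‖) ^ (-((n:ℝ) + 1))) with hIdef
  set V := volume (Metric.ball (0 : EuclideanSpace ℝ (Fin n)) 1) with hV
  have hVpos : 0 < V := Metric.measure_ball_pos _ _ one_pos
  have hVtop : V < ⊤ := measure_ball_lt_top
  have hVr : 0 < V.toReal := ENNReal.toReal_pos hVpos.ne' hVtop.ne
  set Λ : ℝ := (B * I.toReal / V.toReal + 1) ^ (1 / m) with hΛ
  have hbase : 0 < B * I.toReal / V.toReal + 1 := by positivity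
  have hΛpos : 0 < Λ := by positivity
  have hΛm : Λ ^ m = B * I.toReal / V.toReal + 1 := by
    rw [hΛ, ← Real.rpow_mul hbase.le, one_div_mul_cancel hmpos.ne', Real.rpow_one]
  refine ⟨Λ, hΛpos.le, fun c s hs hb => ?_⟩
  by_contra hcon
  push Not at hcon
  set ρ := Λ * s ^ (-η) with hρ
  have hρpos : 0 < ρ := by positivity
  set S := gradient φ ⁻¹' Metric.ball c s with hS
  have hSm : MeasurableSet S := (Metric.isOpen_ball.preimage hgs.continuous).measurableSet
  have himg : gradient φ '' S = Metric.ball c s := by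
    rw [hS, Set.image_preimage_eq_of_subset]
    rw [hr]; exact hb
  have h1 := addHaar_image_le_lintegral_abs_det_fderiv volume hSm (f := gradient φ)
    (f' := fun x => fderiv ℝ (gradient φ) x)
    (fun x _ => ((hgs.differentiable (by simp)) x).hasFDerivAt.hasFDerivWithinAt)
  have hpt : ∀ x ∈ S, ENNReal.ofReal |(fderiv ℝ (gradient φ) x).det| ≤
      ENNReal.ofReal (B * ρ ^ (-m)) * ENNReal.ofReal ((1 + ‖x‖) ^ (-((n:ℝ) + 1))) := by
    intro x hx
    rw [← ENNReal.ofReal_mul (by positivity)]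
    apply ENNReal.ofReal_le_ofReal
    rw [aux_det φ hφsm hgs]
    have hgx : c₀ ≤ g (gradient φ x) := hmin (interior_subset (hb hx))
    have hgx0 := hgpos (gradient φ x)
    have e1 : hessDet φ x = (g (gradient φ x))⁻¹ * Real.exp (-φ x) := by
      rw [← hMA]; field_simp
    have hxρ := hcon x hx
    rw [e1, abs_of_pos (by positivity)]
    have e2 : Real.exp (-φ x) ≤ Real.exp C * Real.exp (-(ε * ‖x‖)) := by
      rw [← Real.exp_add]; apply Real.exp_le_exp.2; linarith [hgrow x]
    have e3 := hdecay ‖x‖ (norm_nonneg x)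
    rw [neg_add, Real.rpow_add (by positivity)] at e3
    have e4 : (1 + ‖x‖) ^ (-m) ≤ ρ ^ (-m) :=
      Real.rpow_le_rpow_of_nonpos hρpos (by linarith) (by linarith)
    calc (g (gradient φ x))⁻¹ * Real.exp (-φ x)
        ≤ c₀⁻¹ * (Real.exp C * (A * ((1 + ‖x‖) ^ (-m) * (1 + ‖x‖) ^ (-((n:ℝ) + 1))))) := by
          gcongr
          exact e2.trans (by gcongr)
      _ ≤ c₀⁻¹ * (Real.exp C * (A * (ρ ^ (-m) * (1 + ‖x‖) ^ (-((n:ℝ) + 1))))) := by gcongr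
      _ = _ := by rw [hB]; ring
  have h2 : volume (Metric.ball c s) ≤ ENNReal.ofReal (B * ρ ^ (-m)) * I := by
    rw [← himg]
    refine h1.trans ((setLIntegral_mono' hSm hpt).trans ((setLIntegral_le_lintegral _ _).trans ?_))
    rw [lintegral_const_mul' _ _ ENNReal.ofReal_ne_top]
  rw [Measure.addHaar_ball_of_pos _ _ hs, finrank_euclideanSpace_fin] at h2
  have h3 := ENNReal.toReal_mono (ENNReal.mul_ne_top ENNReal.ofReal_ne_top hI.ne) h2
  rw [ENNReal.toReal_mul, ENNReal.toReal_mul, ENNReal.toReal_ofReal (by positivity),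
    ENNReal.toReal_ofReal (by positivity)] at h3
  have h4 : ρ ^ (-m) = (Λ ^ m)⁻¹ * s ^ n := by
    rw [hρ, Real.mul_rpow hΛpos.le (by positivity), ← Real.rpow_mul hs.le, Real.rpow_neg hΛpos.le,
      neg_mul_neg, hm, mul_div_cancel₀ _ hη.ne', Real.rpow_natCast]
  rw [h4, hΛm] at h3
  have h5 : V.toReal ≤ B * (B * I.toReal / V.toReal + 1)⁻¹ * I.toReal := by
    have : 0 < s ^ n := by positivity
    refine le_of_mul_le_mul_left (h3.trans_eq ?_) this
    ring
  have h6 : V.toReal * (B * I.toReal / V.toReal + 1) ≤ B * I.toReal := by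
    calc _ ≤ (B * (B * I.toReal / V.toReal + 1)⁻¹ * I.toReal) * (B * I.toReal / V.toReal + 1) := by
          gcongr
      _ = B * I.toReal := by
        generalize B * I.toReal / V.toReal + 1 = z at hbase
        field_simp
  rw [mul_add, mul_div_cancel₀ _ hVr.ne'] at h6
  linarith

lemma aux_holder {n : ℕ} (P : Set (EuclideanSpace ℝ (Fin n)))
    (hPcomp : IsCompact P) (hPconv : Convex ℝ P)
    (h0 : (0 : EuclideanSpace ℝ (Fin n)) ∈ interior P)
    (φ : EuclideanSpace ℝ (Fin n) → ℝ)
    (hφsm : ContDiff ℝ (⊤ : ℕ∞) φ) (hφconv : ConvexOn ℝ Set.univ φ)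
    (γ : ℝ) (hγ : 0 < γ)
    (Λ : ℝ) (hΛ0 : 0 ≤ Λ)
    (hΛ : ∀ (c : EuclideanSpace ℝ (Fin n)) (s : ℝ), 0 < s →
      Metric.ball c s ⊆ interior P →
      ∃ x, gradient φ x ∈ Metric.ball c s ∧ ‖x‖ ≤ Λ * s ^ (-(1 - γ))) :
    ∃ K : ℝ, 0 ≤ K ∧ ∀ p ∈ P, ∀ q ∈ P, ∃ y, ∀ x,
      ⟪p, x⟫_ℝ - φ x ≤ ⟪q, y⟫_ℝ - φ y + K * ‖p - q‖ ^ γ ∨ p = q := by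
  obtain ⟨r, hr, hrb⟩ := Metric.nhds_basis_ball.mem_iff.1 (mem_interior_iff_mem_nhds.1
    (by simpa using h0 : (0 : EuclideanSpace ℝ (Fin n)) ∈ interior (interior P)))
  obtain ⟨R, hR, hRb⟩ := hPcomp.isBounded.exists_pos_norm_le
  set L := R + r with hL
  set θ : ℝ := (1 / 2) ^ γ with hθ
  have hθ1 : θ < 1 := Real.rpow_lt_one (by norm_num) (by norm_num) hγ
  have hθ0 : 0 < θ := by positivity
  -- one step constant
  set C₁ : ℝ := 2 * L * (Λ * (r ^ (-(1 - γ)) * (1 / 2) ^ (-(1 - γ)))) with hC₁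
  have hC₁0 : 0 ≤ C₁ := by positivity
  set D := C₁ / (1 - θ) with hD
  have hθ' : 0 < 1 - θ := by linarith
  have hD0 : 0 ≤ D := by positivity
  set C₀ : ℝ := (L + 2 * R) * (Λ * r ^ (-(1 - γ))) with hC₀
  have hC₀0 : 0 ≤ C₀ := by positivity
  refine ⟨(C₀ + D) * (1 / (2 * R)) ^ γ, by positivity, fun p hp q hq => ?_⟩
  rcases eq_or_ne p q with hpq | hpq
  · exact ⟨0, fun x => Or.inr hpq⟩
  have hd : 0 < ‖p - q‖ := norm_sub_pos_iff.2 hpq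
  have hd2 : ‖p - q‖ ≤ 2 * R := (norm_sub_le _ _).trans (by linarith [hRb p hp, hRb q hq])
  set t := ‖p - q‖ / (2 * R) with ht
  have ht0 : 0 < t := by positivity
  have ht1 : t ≤ 1 := by rw [ht, div_le_one (by positivity)]; exact hd2
  set T : ℕ → ℝ := fun k => t * (1 / 2) ^ k with hT
  have hT0 : ∀ k, 0 < T k := fun k => by positivity
  have hT1 : ∀ k, T k ≤ 1 := fun k =>
    mul_le_one₀ ht1 (by positivity) (pow_le_one₀ (by norm_num) (by norm_num))
  have hTs : ∀ k, T (k + 1) = T k * (1 / 2) := fun k => by simp only [hT, pow_succ]; ring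
  have hball : ∀ k, Metric.ball ((1 - T k) • p) (T k * r) ⊆ interior P := by
    intro k w hw
    rw [mem_ball_iff_norm] at hw
    have hz : (T k)⁻¹ • (w - (1 - T k) • p) ∈ interior P := by
      apply hrb
      rw [mem_ball_zero_iff, norm_smul, norm_inv, Real.norm_of_nonneg (hT0 k).le,
        inv_mul_lt_iff₀ (hT0 k)]
      exact hw
    have := hPconv.combo_self_interior_mem_interior hp hz (a := 1 - T k) (b := T k)
      (by linarith [hT1 k]) (hT0 k) (by ring)
    rwa [smul_inv_smul₀ (hT0 k).ne', add_sub_cancel] at this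
  choose X hX hXn using fun k => hΛ _ _ (mul_pos (hT0 k) hr) (hball k)
  set W : ℕ → EuclideanSpace ℝ (Fin n) := fun k => gradient φ (X k) with hW
  set u : ℕ → ℝ := fun k => ⟪W k, X k⟫_ℝ - φ (X k) with hu
  have hWp : ∀ k, ‖W k - p‖ ≤ T k * L := by
    intro k
    have h1 : ‖W k - (1 - T k) • p‖ ≤ T k * r := (mem_ball_iff_norm.1 (hX k)).le
    have h2 : ‖T k • p‖ ≤ T k * R := by
      rw [norm_smul, Real.norm_of_nonneg (hT0 k).le]
      exact mul_le_mul_of_nonneg_left (hRb p hp) (hT0 k).le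
    calc ‖W k - p‖ = ‖(W k - (1 - T k) • p) - T k • p‖ := by congr 1; module
      _ ≤ _ := norm_sub_le _ _
      _ ≤ _ := by rw [hL]; linarith
  have hXn' : ∀ k, ‖X k‖ ≤ Λ * (T k ^ (-(1 - γ)) * r ^ (-(1 - γ))) := by
    intro k; rw [← Real.mul_rpow (hT0 k).le hr.le]; exact hXn k
  have hpow : ∀ k, T k * T k ^ (-(1 - γ)) = T k ^ γ := by
    intro k
    rw [← Real.rpow_one_add' (hT0 k).le (by intro h; linarith)]
    congr 1; ring
  have hstep : ∀ k, u (k + 1) + D * T (k + 1) ^ γ ≤ u k + D * T k ^ γ := by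
    intro k
    have h1 : ⟪W k, X (k + 1)⟫_ℝ - φ (X (k + 1)) ≤ u k := aux_grad_ineq φ hφsm hφconv _ _
    have h2 : ⟪W (k + 1) - W k, X (k + 1)⟫_ℝ ≤ ‖W (k + 1) - W k‖ * ‖X (k + 1)‖ :=
      real_inner_le_norm _ _
    have h3 : ‖W (k + 1) - W k‖ ≤ 2 * L * T k := by
      have a := hWp k
      have b := hWp (k + 1)
      rw [hTs] at b
      have : 0 ≤ T k * L := by have := hT0 k; positivity
      calc ‖W (k + 1) - W k‖ = ‖(W (k + 1) - p) - (W k - p)‖ := by congr 1; module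
        _ ≤ _ := norm_sub_le _ _
        _ ≤ _ := by linarith
    have h4 := hXn' (k + 1)
    rw [hTs, Real.mul_rpow (hT0 k).le (by norm_num)] at h4
    have h5 : ‖W (k + 1) - W k‖ * ‖X (k + 1)‖ ≤ C₁ * T k ^ γ := by
      calc _ ≤ (2 * L * T k) * _ := mul_le_mul h3 h4 (norm_nonneg _) (by have := hT0 k; positivity)
        _ = C₁ * (T k * T k ^ (-(1 - γ))) := by rw [hC₁]; ring
        _ = _ := by rw [hpow]
    have h6 : T (k + 1) ^ γ = T k ^ γ * θ := by
      rw [hTs, Real.mul_rpow (hT0 k).le (by norm_num)]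
    have h7 : C₁ = D * (1 - θ) := by rw [hD]; field_simp
    rw [h6]
    rw [h7] at h5
    rw [inner_sub_left] at h2
    simp only [hu] at h1 ⊢
    linarith
  have hmono : ∀ k, u k + D * T k ^ γ ≤ u 0 + D * T 0 ^ γ := by
    intro k
    induction k with
    | zero => exact le_rfl
    | succ k ih => exact (hstep k).trans ih
  have hTzero : T 0 = t := by simp [hT]
  have hlim : Filter.Tendsto T Filter.atTop (nhds 0) := by
    have := (tendsto_pow_atTop_nhds_zero_of_lt_one (r := (1/2:ℝ)) (by norm_num) (by norm_num)).const_mul t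
    simpa [hT] using this
  refine ⟨X 0, fun x => Or.inl ?_⟩
  have hA : ⟪p, x⟫_ℝ - φ x ≤ u 0 + D * t ^ γ := by
    have hl : Filter.Tendsto (fun k => u 0 + D * t ^ γ + T k * L * ‖x‖) Filter.atTop
        (nhds (u 0 + D * t ^ γ + 0 * L * ‖x‖)) :=
      ((hlim.mul_const L).mul_const ‖x‖).const_add _
    rw [zero_mul, zero_mul, add_zero] at hl
    refine ge_of_tendsto' hl fun k => ?_
    have h1 : ⟪W k, x⟫_ℝ - φ x ≤ u k := aux_grad_ineq φ hφsm hφconv _ _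
    have h2 : ⟪p - W k, x⟫_ℝ ≤ ‖p - W k‖ * ‖x‖ := real_inner_le_norm _ _
    have h3 : ‖p - W k‖ * ‖x‖ ≤ T k * L * ‖x‖ := by
      rw [norm_sub_rev]; exact mul_le_mul_of_nonneg_right (hWp k) (norm_nonneg _)
    have h4 := hmono k
    have h5 : 0 ≤ D * T k ^ γ := mul_nonneg hD0 (Real.rpow_nonneg (hT0 k).le _)
    rw [inner_sub_left] at h2
    rw [hTzero] at h4
    linarith
  have hBd : u 0 ≤ ⟪q, X 0⟫_ℝ - φ (X 0) + C₀ * t ^ γ := by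
    have h2 : ⟪W 0 - q, X 0⟫_ℝ ≤ ‖W 0 - q‖ * ‖X 0‖ := real_inner_le_norm _ _
    have h3 : ‖W 0 - q‖ ≤ (L + 2 * R) * T 0 := by
      have e : ‖p - q‖ = 2 * R * T 0 := by rw [hTzero, ht]; field_simp
      calc ‖W 0 - q‖ = ‖(W 0 - p) + (p - q)‖ := by congr 1; module
        _ ≤ _ := norm_add_le _ _
        _ ≤ _ := by rw [e]; linarith [hWp 0]
    have h5 : ‖W 0 - q‖ * ‖X 0‖ ≤ C₀ * t ^ γ := by
      calc _ ≤ ((L + 2 * R) * T 0) * _ :=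
            mul_le_mul h3 (hXn' 0) (norm_nonneg _) (by have := hT0 0; positivity)
        _ = C₀ * (T 0 * T 0 ^ (-(1 - γ))) := by rw [hC₀]; ring
        _ = _ := by rw [hpow, hTzero]
    rw [inner_sub_left] at h2
    simp only [hu]
    linarith
  have hfin : (C₀ + D) * (1 / (2 * R)) ^ γ * ‖p - q‖ ^ γ = (C₀ + D) * t ^ γ := by
    rw [mul_assoc, ← Real.mul_rpow (by positivity) hd.le, ht]
    congr 2; ring
  rw [hfin]
  linarith

/-- For a smooth convex solution `φ` of
`g(∇φ) det D²φ = e^{-φ}` whose gradient is a diffeomorphism onto the interior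
of the convex body `P`: (i) `φ - φ_P` is globally bounded, and (ii) for every
Hölder exponent `γ ∈ (0,1)` the Legendre transform `φ*` is `γ`-Hölder
continuous on `P`. -/
theorem statement3 {n : ℕ} (P : Set (EuclideanSpace ℝ (Fin n)))
    (hPcomp : IsCompact P) (hPconv : Convex ℝ P)
    (h0 : (0 : EuclideanSpace ℝ (Fin n)) ∈ interior P)
    (g : EuclideanSpace ℝ (Fin n) → ℝ)
    (hg : ContDiff ℝ (⊤ : ℕ∞) g) (hgpos : ∀ p, 0 < g p)
    (φ : EuclideanSpace ℝ (Fin n) → ℝ)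
    (hφsm : ContDiff ℝ (⊤ : ℕ∞) φ) (hφconv : ConvexOn ℝ Set.univ φ)
    (hMA : ∀ x, g (gradient φ x) * hessDet φ x = Real.exp (-φ x))
    (hdiffeo : IsGradDiffeoOnto φ (interior P)) :
    (∃ C : ℝ, ∀ x, |φ x - suppFn P x| ≤ C) ∧
    (∀ γ ∈ Set.Ioo (0 : ℝ) 1, ∃ K : ℝ, ∀ p ∈ P, ∀ q ∈ P,
      |legendre φ p - legendre φ q| ≤ K * ‖p - q‖ ^ γ) := by
  have hmain : ∀ γ ∈ Set.Ioo (0 : ℝ) 1, ∃ K : ℝ, 0 ≤ K ∧ ∀ p ∈ P, ∀ q ∈ P, ∃ y, ∀ x,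
      ⟪p, x⟫_ℝ - φ x ≤ ⟪q, y⟫_ℝ - φ y + K * ‖p - q‖ ^ γ ∨ p = q := by
    intro γ hγ
    obtain ⟨Λ, hΛ0, hΛ⟩ := aux_key P hPcomp h0 g hg hgpos φ hφsm hφconv hMA hdiffeo (1 - γ)
      (by linarith [hγ.2])
    exact aux_holder P hPcomp hPconv h0 φ hφsm hφconv γ hγ.1 Λ hΛ0 hΛ
  obtain ⟨R, hR, hRb⟩ := hPcomp.isBounded.exists_pos_norm_le
  have h0P : (0 : EuclideanSpace ℝ (Fin n)) ∈ P := interior_subset h0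
  have hr := hdiffeo.2.2.1
  have hzero : ∃ U : ℝ, ∀ x, ⟪(0 : EuclideanSpace ℝ (Fin n)), x⟫_ℝ - φ x ≤ U := by
    have : (0 : EuclideanSpace ℝ (Fin n)) ∈ Set.range (gradient φ) := hr ▸ h0
    obtain ⟨y, hy⟩ := this
    refine ⟨⟪(0 : EuclideanSpace ℝ (Fin n)), y⟫_ℝ - φ y, fun x => ?_⟩
    have := aux_grad_ineq φ hφsm hφconv y x
    rwa [hy] at this
  have hbd : ∃ U : ℝ, ∀ p ∈ P, ∀ x, ⟪p, x⟫_ℝ - φ x ≤ U := by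
    obtain ⟨U, hU⟩ := hzero
    obtain ⟨K, hK, h⟩ := hmain (1 / 2) (by norm_num)
    refine ⟨U + K * R ^ (1 / 2 : ℝ), fun p hp x => ?_⟩
    have hKR : 0 ≤ K * R ^ (1 / 2 : ℝ) := by positivity
    obtain ⟨y, hy⟩ := h p hp 0 h0P
    rcases hy x with h1 | h1
    · have h2 : K * ‖p - 0‖ ^ (1 / 2 : ℝ) ≤ K * R ^ (1 / 2 : ℝ) := by
        rw [sub_zero]
        exact mul_le_mul_of_nonneg_left
          (Real.rpow_le_rpow (norm_nonneg _) (hRb p hp) (by norm_num)) hK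
      linarith [hU y]
    · subst h1
      linarith [hU x]
  obtain ⟨U, hU⟩ := hbd
  refine ⟨⟨max (φ 0) U, fun x => ?_⟩, fun γ hγ => ?_⟩
  · have hne : Nonempty P := ⟨⟨0, h0P⟩⟩
    have hlow : suppFn P x ≤ φ x + U := by
      refine ciSup_le fun p => ?_
      have := hU p p.2 x
      rw [real_inner_comm]
      linarith
    have hup : φ x ≤ φ 0 + suppFn P x := by
      have h1 := aux_grad_ineq φ hφsm hφconv x 0
      rw [inner_zero_right] at h1
      have hmem : gradient φ x ∈ P := interior_subset (hr ▸ Set.mem_range_self x)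
      have hb : BddAbove (Set.range fun p : P => ⟪x, (p : EuclideanSpace ℝ (Fin n))⟫_ℝ) := by
        refine ⟨φ x + U, ?_⟩
        rintro _ ⟨p, rfl⟩
        have := hU p p.2 x
        simp only
        rw [real_inner_comm]
        linarith
      have h2 : ⟪x, gradient φ x⟫_ℝ ≤ suppFn P x := le_ciSup hb ⟨gradient φ x, hmem⟩
      rw [real_inner_comm] at h2
      linarith
    rw [abs_le]
    constructor
    · linarith [le_max_right (φ 0) U]
    · linarith [le_max_left (φ 0) U]
  · obtain ⟨K, hK, h⟩ := hmain γ hγ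
    have key : ∀ p ∈ P, ∀ q ∈ P, legendre φ p - legendre φ q ≤ K * ‖p - q‖ ^ γ := by
      intro p hp q hq
      have hb : BddAbove (Set.range fun x => ⟪q, x⟫_ℝ - φ x) := by
        refine ⟨U, ?_⟩
        rintro _ ⟨x, rfl⟩
        exact hU q hq x
      obtain ⟨y, hy⟩ := h p hp q hq
      rcases eq_or_ne p q with hpq | hpq
      · subst hpq
        rw [sub_self]
        positivity
      · have h1 : legendre φ p ≤ ⟪q, y⟫_ℝ - φ y + K * ‖p - q‖ ^ γ :=
          ciSup_le fun x => (hy x).resolve_right hpq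
        have h2 : ⟪q, y⟫_ℝ - φ y ≤ legendre φ q := le_ciSup hb y
        linarith
    refine ⟨K, fun p hp q hq => abs_le.2 ⟨?_, key p hp q hq⟩⟩
    have := key q hq p hp
    rw [norm_sub_rev] at this
    linarith
end

section
/- Let P ⊆ ℝⁿ be a convex body and let φ : ℝⁿ → ℝ be a convex function such that φ − φ_P is bounded on ℝⁿ. Then: (i) φ*(p) = +∞ for every p ∉ P; (ii) φ* is finite (real-valued) and bounded on P; (iii) sup_{x ∈ ℝⁿ} (φ(x) − φ_P(x)) = − inf_{p ∈ P} φ*(p); (iv) inf_{x ∈ ℝⁿ} (φ(x) − φ_P(x)) = − sup_{p ∈ P} φ*(p); and consequently (v) sup_{x ∈ ℝⁿ} |φ(x) − φ_P(x)| = sup_{p ∈ P} |φ*(p)|. -/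
open scoped InnerProductSpace
open MeasureTheory

/-- If `φ` is convex and `φ - φ_P` is bounded, then:
(i) `φ* = +∞` off `P`; (ii) `φ*` is finite (real-valued) and bounded on `P`;
(iii) `sup (φ - φ_P) = - inf_P φ*`; (iv) `inf (φ - φ_P) = - sup_P φ*`;
(v) `sup |φ - φ_P| = sup_P |φ*|`. -/
theorem statement4 {n : ℕ} (P : Set (EuclideanSpace ℝ (Fin n)))
    (hPcomp : IsCompact P) (hPconv : Convex ℝ P)
    (hPint : (interior P).Nonempty)
    (φ : EuclideanSpace ℝ (Fin n) → ℝ)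
    (hφconv : ConvexOn ℝ Set.univ φ)
    (hbd : ∃ C : ℝ, ∀ x, |φ x - suppFn P x| ≤ C) :
    (∀ p, p ∉ P → legendreE φ p = ⊤) ∧
    (∀ p ∈ P, legendreE φ p = ((legendre φ p : ℝ) : EReal)) ∧
    (∃ M : ℝ, ∀ p ∈ P, |legendre φ p| ≤ M) ∧
    (⨆ x, (φ x - suppFn P x)) = -(⨅ p : P, legendre φ (p : EuclideanSpace ℝ (Fin n))) ∧
    (⨅ x, (φ x - suppFn P x)) = -(⨆ p : P, legendre φ (p : EuclideanSpace ℝ (Fin n))) ∧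
    (⨆ x, |φ x - suppFn P x|) = (⨆ p : P, |legendre φ (p : EuclideanSpace ℝ (Fin n))|) := by
  obtain ⟨C, hC⟩ := hbd
  obtain ⟨p0, hp0⟩ := hPint
  have hp0 : p0 ∈ P := interior_subset hp0
  haveI : Nonempty P := ⟨⟨p0, hp0⟩⟩
  -- support function facts
  have hcont : ∀ x : EuclideanSpace ℝ (Fin n),
      Continuous (fun p : EuclideanSpace ℝ (Fin n) => ⟪x, p⟫_ℝ) := fun x => by fun_prop
  have hmax : ∀ x, ∃ p ∈ P, suppFn P x = ⟪x, p⟫_ℝ ∧ ∀ q ∈ P, ⟪x, q⟫_ℝ ≤ ⟪x, p⟫_ℝ := by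
    intro x
    obtain ⟨p, hp, hpm⟩ := hPcomp.exists_isMaxOn ⟨p0, hp0⟩ (hcont x).continuousOn
    have hpm' : ∀ q ∈ P, ⟪x, q⟫_ℝ ≤ ⟪x, p⟫_ℝ := fun q hq => hpm hq
    refine ⟨p, hp, le_antisymm (ciSup_le fun q => hpm' q q.2) ?_, hpm'⟩
    exact le_ciSup (f := fun q : P => ⟪x, (q : EuclideanSpace ℝ (Fin n))⟫_ℝ)
      ⟨⟪x, p⟫_ℝ, by rintro _ ⟨q, rfl⟩; exact hpm' q q.2⟩ ⟨p, hp⟩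
  have hle : ∀ x, ∀ p ∈ P, ⟪p, x⟫_ℝ ≤ suppFn P x := by
    intro x p hp
    obtain ⟨q, _, h1, h2⟩ := hmax x
    rw [h1, real_inner_comm]; exact h2 p hp
  have h0 : suppFn P 0 = 0 := by
    obtain ⟨q, _, h1, _⟩ := hmax 0
    rw [h1, inner_zero_left]
  have hba : BddAbove (Set.range fun x => φ x - suppFn P x) :=
    ⟨C, by rintro _ ⟨x, rfl⟩; exact (abs_le.1 (hC x)).2⟩
  have hbb : BddBelow (Set.range fun x => φ x - suppFn P x) :=
    ⟨-C, by rintro _ ⟨x, rfl⟩; exact (abs_le.1 (hC x)).1⟩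
  have hbabs : BddAbove (Set.range fun x => |φ x - suppFn P x|) :=
    ⟨C, by rintro _ ⟨x, rfl⟩; exact hC x⟩
  -- unboundedness off P
  have hoff : ∀ p, p ∉ P → ∀ M : ℝ, ∃ x, M < ⟪p, x⟫_ℝ - φ x := by
    intro p hp M
    obtain ⟨f, u, hf1, hf2⟩ := geometric_hahn_banach_closed_point hPconv hPcomp.isClosed hp
    obtain ⟨v, rfl⟩ := (InnerProductSpace.toDual ℝ (EuclideanSpace ℝ (Fin n))).surjective f
    simp only [InnerProductSpace.toDual_apply_apply] at hf1 hf2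
    have hd : 0 < ⟪v, p⟫_ℝ - u := by linarith
    obtain ⟨k, hk⟩ := exists_nat_gt ((M + C) / (⟪v, p⟫_ℝ - u))
    rw [div_lt_iff₀ hd] at hk
    refine ⟨(k : ℝ) • v, ?_⟩
    have h1 : suppFn P ((k : ℝ) • v) ≤ k * u := by
      obtain ⟨q, hq, h1, _⟩ := hmax ((k : ℝ) • v)
      rw [h1, real_inner_smul_left]
      exact mul_le_mul_of_nonneg_left (hf1 q hq).le (Nat.cast_nonneg k)
    have h2 := (abs_le.1 (hC ((k : ℝ) • v))).2
    rw [real_inner_smul_right, real_inner_comm]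
    linarith
  have hbL : ∀ p ∈ P, BddAbove (Set.range fun x => ⟪p, x⟫_ℝ - φ x) := by
    intro p hp
    refine ⟨C, ?_⟩
    rintro _ ⟨x, rfl⟩
    have := hle x p hp
    have := (abs_le.1 (hC x)).1
    simp only; linarith
  have hLge : ∀ p ∈ P, ∀ x, ⟪p, x⟫_ℝ - φ x ≤ legendre φ p := fun p hp x =>
    le_ciSup (hbL p hp) x
  have hLle : ∀ p ∈ P, legendre φ p ≤ -(⨅ x, (φ x - suppFn P x)) := by
    intro p hp
    refine ciSup_le fun x => ?_
    have := hle x p hp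
    have := ciInf_le hbb x
    linarith
  have hLge' : ∀ p ∈ P, -(⨆ x, (φ x - suppFn P x)) ≤ legendre φ p := by
    intro p hp
    have h1 := hLge p hp 0
    have h2 := le_ciSup hba 0
    simp only [h0] at h2
    rw [inner_zero_right] at h1
    linarith
  have hPa : BddAbove (Set.range fun p : P => legendre φ (p : EuclideanSpace ℝ (Fin n))) :=
    ⟨_, by rintro _ ⟨p, rfl⟩; exact hLle p p.2⟩
  have hPb : BddBelow (Set.range fun p : P => legendre φ (p : EuclideanSpace ℝ (Fin n))) :=
    ⟨_, by rintro _ ⟨p, rfl⟩; exact hLge' p p.2⟩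
  have hM : ∃ M : ℝ, ∀ p ∈ P, |legendre φ p| ≤ M := by
    refine ⟨max (-(⨅ x, (φ x - suppFn P x))) (⨆ x, (φ x - suppFn P x)), fun p hp => ?_⟩
    refine abs_le'.2 ⟨(hLle p hp).trans (le_max_left _ _), le_trans ?_ (le_max_right _ _)⟩
    linarith [hLge' p hp]
  have hPabs : BddAbove (Set.range fun p : P => |legendre φ (p : EuclideanSpace ℝ (Fin n))|) := by
    obtain ⟨M, hM⟩ := hM
    exact ⟨M, by rintro _ ⟨p, rfl⟩; exact hM p p.2⟩
  have hiii : (⨆ x, (φ x - suppFn P x)) =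
      -(⨅ p : P, legendre φ (p : EuclideanSpace ℝ (Fin n))) := by
    apply le_antisymm
    · refine ciSup_le fun x => le_of_forall_pos_le_add fun ε hε => ?_
      obtain ⟨l, c, h1, h2⟩ := hφconv.exists_affine_le_of_lt (𝕜 := ℝ) (x := x)
        (a := φ x - ε) (Set.mem_univ x) (by linarith) isClosed_univ
        (hφconv.locallyLipschitz.continuous.lowerSemicontinuous.lowerSemicontinuousOn _)
      have h1' : ∀ y, l y + c ≤ φ y := fun y => by simpa using h1 ⟨y, Set.mem_univ y⟩
      obtain ⟨p, rfl⟩ := (InnerProductSpace.toDual ℝ (EuclideanSpace ℝ (Fin n))).surjective l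
      simp only [InnerProductSpace.toDual_apply_apply, RCLike.re_to_real] at h1' h2
      have hp : p ∈ P := by
        by_contra hp
        obtain ⟨y, hy⟩ := hoff p hp (-c)
        linarith [h1' y]
      have h3 : legendre φ p ≤ -c := ciSup_le fun y => by linarith [h1' y]
      have h4 := ciInf_le hPb ⟨p, hp⟩
      have h5 := hle x p hp
      simp only at h4
      linarith
    · have : -(⨆ x, (φ x - suppFn P x)) ≤
          (⨅ p : P, legendre φ (p : EuclideanSpace ℝ (Fin n))) := le_ciInf fun p => hLge' p p.2
      linarith
  have hiv : (⨅ x, (φ x - suppFn P x)) =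
      -(⨆ p : P, legendre φ (p : EuclideanSpace ℝ (Fin n))) := by
    apply le_antisymm
    · have : (⨆ p : P, legendre φ (p : EuclideanSpace ℝ (Fin n))) ≤
          -(⨅ x, (φ x - suppFn P x)) := ciSup_le fun p => hLle p p.2
      linarith
    · refine le_ciInf fun x => ?_
      obtain ⟨p, hp, h1, _⟩ := hmax x
      have h2 := hLge p hp x
      have h3 := le_ciSup hPa ⟨p, hp⟩
      rw [real_inner_comm, ← h1] at h2
      simp only at h3
      linarith
  refine ⟨?_, ?_, hM, hiii, hiv, ?_⟩
  · intro p hp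
    refine (EReal.eq_top_iff_forall_lt _).2 fun M => ?_
    obtain ⟨x, hx⟩ := hoff p hp M
    exact (EReal.coe_lt_coe_iff.2 hx).trans_le
      (le_iSup (fun x => ((⟪p, x⟫_ℝ - φ x : ℝ) : EReal)) x)
  · intro p hp
    apply le_antisymm
    · exact iSup_le fun x => EReal.coe_le_coe_iff.2 (hLge p hp x)
    · refine EReal.le_of_forall_lt_iff_le.1 fun z hz => ?_
      refine EReal.coe_le_coe_iff.2 (ciSup_le fun x => ?_)
      have := (le_iSup (fun x => ((⟪p, x⟫_ℝ - φ x : ℝ) : EReal)) x).trans hz.le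
      exact EReal.coe_le_coe_iff.1 this
  · apply le_antisymm
    · refine ciSup_le fun x => abs_le'.2 ⟨?_, ?_⟩
      · refine (le_ciSup hba x).trans ?_
        rw [hiii, neg_le]
        refine le_ciInf fun p => ?_
        have := le_ciSup hPabs p
        have := neg_abs_le (legendre φ (p : EuclideanSpace ℝ (Fin n)))
        linarith
      · have h1 := ciInf_le hbb x
        rw [hiv] at h1
        have h2 : (⨆ p : P, legendre φ (p : EuclideanSpace ℝ (Fin n))) ≤
            ⨆ p : P, |legendre φ (p : EuclideanSpace ℝ (Fin n))| :=
          ciSup_mono hPabs fun p => le_abs_self _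
        linarith
    · refine ciSup_le fun p => abs_le'.2 ⟨?_, ?_⟩
      · refine (hLle p p.2).trans ?_
        rw [neg_le]
        refine le_ciInf fun x => ?_
        have := le_ciSup hbabs x
        have := neg_abs_le (φ x - suppFn P x)
        linarith
      · have h1 := hLge' p p.2
        have h2 : (⨆ x, (φ x - suppFn P x)) ≤ ⨆ x, |φ x - suppFn P x| :=
          ciSup_mono hbabs fun x => le_abs_self _
        linarith
end

section
/- Let P ⊆ ℝⁿ be a convex body and let φ : ℝⁿ → ℝ be a convex function such that φ − φ_P is bounded on ℝⁿ. Then: (i) for every x ∈ ℝⁿ, every subgradient p of φ at x lies in P, and moreover φ*(p) = ⟨p, x⟩ − φ(x); (ii) for every point p in the interior of P, the supremum defining φ*(p) is attained at some point x_p ∈ ℝⁿ, and p is a subgradient of φ at x_p; in particular the interior of P is contained in the image of the subdifferential map of φ. -/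
open scoped InnerProductSpace
open MeasureTheory

/-- `p` is a subgradient of `φ` at `x`: `φ(y) ≥ φ(x) + ⟨p, y - x⟩` for all `y`. -/
def IsSubgradAt {n : ℕ} (φ : EuclideanSpace ℝ (Fin n) → ℝ)
    (p x : EuclideanSpace ℝ (Fin n)) : Prop :=
  ∀ y, φ x + ⟪p, y - x⟫_ℝ ≤ φ y

/-- Let `φ` be convex with `φ - φ_P` bounded. (i) Every
subgradient `p` of `φ` at some point `x` lies in `P` and `φ*(p) = ⟨p,x⟩ - φ(x)`;
(ii) for every `p` in the interior of `P` the sup defining `φ*(p)` is attained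
at some `x_p`, and `p` is a subgradient of `φ` at `x_p`; in particular the
interior of `P` is contained in the image of the subdifferential of `φ`. -/
theorem statement5 {n : ℕ} (P : Set (EuclideanSpace ℝ (Fin n)))
    (hPcomp : IsCompact P) (hPconv : Convex ℝ P)
    (hPint : (interior P).Nonempty)
    (φ : EuclideanSpace ℝ (Fin n) → ℝ)
    (hφconv : ConvexOn ℝ Set.univ φ)
    (hbd : ∃ C : ℝ, ∀ x, |φ x - suppFn P x| ≤ C) :
    (∀ x p, IsSubgradAt φ p x →
      p ∈ P ∧ legendre φ p = ⟪p, x⟫_ℝ - φ x) ∧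
    (∀ p ∈ interior P, ∃ x_p,
      (∀ x, ⟪p, x⟫_ℝ - φ x ≤ ⟪p, x_p⟫_ℝ - φ x_p) ∧ IsSubgradAt φ p x_p) ∧
    interior P ⊆ {p | ∃ x, IsSubgradAt φ p x} := by
  obtain ⟨C, hC⟩ := hbd
  have hne : P.Nonempty := hPint.mono interior_subset
  haveI : Nonempty P := hne.to_subtype
  have hbdd : ∀ x : EuclideanSpace ℝ (Fin n),
      BddAbove (Set.range fun p : P => ⟪x, (p : EuclideanSpace ℝ (Fin n))⟫_ℝ) := by
    intro x
    have h := hPcomp.bddAbove_image (f := fun p => ⟪x, p⟫_ℝ) (by fun_prop)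
    rwa [Set.image_eq_range] at h
  have key : ∀ p ∈ interior P, ∃ x_p,
      (∀ x, ⟪p, x⟫_ℝ - φ x ≤ ⟪p, x_p⟫_ℝ - φ x_p) ∧ IsSubgradAt φ p x_p := by
    intro p hp
    obtain ⟨r, hr, hball⟩ := Metric.nhds_basis_closedBall.mem_iff.1 (mem_interior_iff_mem_nhds.1 hp)
    have hlow : ∀ x, r * ‖x‖ - C ≤ φ x - ⟪p, x⟫_ℝ := by
      intro x
      have h1 : ⟪x, p⟫_ℝ + r * ‖x‖ ≤ suppFn P x := by
        have hmem : p + (r * ‖x‖⁻¹) • x ∈ P := by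
          apply hball
          rw [Metric.mem_closedBall, dist_eq_norm, add_sub_cancel_left, norm_smul]
          by_cases hx : ‖x‖ = 0
          · simp [hx, hr.le]
          · rw [norm_mul, norm_inv, norm_norm, mul_assoc, inv_mul_cancel₀ hx, mul_one,
              Real.norm_of_nonneg hr.le]
        have := le_ciSup (hbdd x) ⟨_, hmem⟩
        simp only [inner_add_right, inner_smul_right, real_inner_self_eq_norm_sq] at this
        have e : r * ‖x‖⁻¹ * ‖x‖ ^ 2 = r * ‖x‖ := by
          by_cases hx : ‖x‖ = 0
          · simp [hx]
          · field_simp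
        rw [e] at this
        exact this
      have h2 := (abs_le.1 (hC x)).1
      rw [real_inner_comm] at h1
      linarith
    have hcont : Continuous φ := by
      rw [← continuousOn_univ]
      exact hφconv.continuousOn isOpen_univ
    have hg : Continuous fun x => φ x - ⟪p, x⟫_ℝ := by fun_prop
    have hco : Filter.Tendsto (fun x => φ x - ⟪p, x⟫_ℝ)
        (Filter.cocompact (EuclideanSpace ℝ (Fin n))) Filter.atTop := by
      refine Filter.tendsto_atTop_mono hlow ?_
      exact Filter.tendsto_atTop_add_const_right _ (-C)
        ((tendsto_norm_cocompact_atTop).const_mul_atTop hr)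
    obtain ⟨x0, hx0⟩ := hg.exists_forall_le hco
    refine ⟨x0, fun x => by linarith [hx0 x], fun y => ?_⟩
    rw [inner_sub_right]
    linarith [hx0 y]
  refine ⟨?_, key, fun p hp => ?_⟩
  · intro x p hp
    constructor
    · by_contra hpP
      obtain ⟨f, u, hf, hu⟩ := geometric_hahn_banach_closed_point hPconv hPcomp.isClosed hpP
      obtain ⟨v, rfl⟩ := (InnerProductSpace.toDual ℝ (EuclideanSpace ℝ (Fin n))).surjective f
      simp only [InnerProductSpace.toDual_apply_apply] at hf hu
      have hd : 0 < ⟪v, p⟫_ℝ - u := by linarith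
      have hall : ∀ t : ℝ, 0 ≤ t → t * (⟪v, p⟫_ℝ - u) ≤ C - φ x + ⟪p, x⟫_ℝ := by
        intro t ht
        have h1 := hp (t • v)
        have h2 := (abs_le.1 (hC (t • v))).2
        have h3 : suppFn P (t • v) ≤ t * u := by
          refine ciSup_le fun q => ?_
          rw [real_inner_smul_left]
          exact mul_le_mul_of_nonneg_left (hf q q.2).le ht
        rw [inner_sub_right, inner_smul_right, real_inner_comm] at h1
        linarith
      have h0 := hall 0 le_rfl
      have h1 := hall ((C - φ x + ⟪p, x⟫_ℝ + 1) / (⟪v, p⟫_ℝ - u)) (div_nonneg (by linarith) hd.le)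
      rw [div_mul_cancel₀ _ hd.ne'] at h1
      linarith
    · have hle : ∀ y, ⟪p, y⟫_ℝ - φ y ≤ ⟪p, x⟫_ℝ - φ x := by
        intro y
        have := hp y
        rw [inner_sub_right] at this
        linarith
      exact le_antisymm (ciSup_le hle)
        (le_ciSup (f := fun y => ⟪p, y⟫_ℝ - φ y) ⟨_, by rintro _ ⟨y, rfl⟩; exact hle y⟩ x)
  · obtain ⟨x, -, hx⟩ := key p hp
    exact ⟨x, hx⟩
end

section
/- Let P ⊆ ℝⁿ be a convex body and let φ : ℝⁿ → ℝ be a convex function such that φ ≤ φ_P + C on ℝⁿ for some constant C. Then sup_{x ∈ ℝⁿ} (φ(x) − φ_P(x)) = φ(0). In particular, sup_{x ∈ ℝⁿ} (φ(x) − φ_P(x)) = 0 if and only if φ(0) = 0. -/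
open scoped InnerProductSpace
open MeasureTheory

/-- If `φ` is convex and `φ ≤ φ_P + C`, then
`sup_x (φ(x) - φ_P(x)) = φ(0)`; in particular this sup vanishes iff
`φ(0) = 0`. -/
theorem statement7 {n : ℕ} (P : Set (EuclideanSpace ℝ (Fin n)))
    (hPcomp : IsCompact P) (hPconv : Convex ℝ P)
    (hPint : (interior P).Nonempty)
    (φ : EuclideanSpace ℝ (Fin n) → ℝ)
    (hφconv : ConvexOn ℝ Set.univ φ)
    (C : ℝ) (hub : ∀ x, φ x ≤ suppFn P x + C) :
    (⨆ x, (φ x - suppFn P x)) = φ 0 ∧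
    ((⨆ x, (φ x - suppFn P x)) = 0 ↔ φ 0 = 0) := by
  have h0 : suppFn P 0 = 0 := by simp [suppFn]
  have hom : ∀ (t : ℝ) x, 0 ≤ t → suppFn P (t • x) = t * suppFn P x := by
    intro t x ht
    simp only [suppFn, real_inner_smul_left]
    rw [Real.mul_iSup_of_nonneg ht]
  have key : ∀ x, φ x - suppFn P x ≤ φ 0 := by
    intro x
    by_contra! hd
    obtain ⟨d, hd'⟩ : ∃ d, d = φ x - suppFn P x - φ 0 := ⟨_, rfl⟩
    have hdpos : 0 < d := by linarith
    obtain ⟨K, hK⟩ : ∃ K, K = C - φ 0 := ⟨_, rfl⟩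
    have hden : 0 < 2 * (d + |K|) := by positivity
    obtain ⟨s, hs⟩ : ∃ s, s = d / (2 * (d + |K|)) := ⟨_, rfl⟩
    have hspos : 0 < s := by rw [hs]; positivity
    have hsm : s * (2 * (d + |K|)) = d := by rw [hs]; field_simp
    have hs1 : s ≤ 1 := by
      rw [hs, div_le_one hden]
      linarith [abs_nonneg K]
    have hc := hφconv.2 (Set.mem_univ (0 : EuclideanSpace ℝ (Fin n)))
      (Set.mem_univ (s⁻¹ • x)) (sub_nonneg.2 hs1) hspos.le (by ring)
    rw [smul_zero, zero_add, smul_inv_smul₀ hspos.ne', smul_eq_mul, smul_eq_mul] at hc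
    have h2 := mul_le_mul_of_nonneg_left (hub (s⁻¹ • x)) hspos.le
    rw [hom _ _ (inv_nonneg.2 hspos.le), mul_add, mul_inv_cancel_left₀ hspos.ne'] at h2
    have h3 : d ≤ s * K := by rw [hd', hK]; linarith
    have h4 : s * K ≤ s * |K| := mul_le_mul_of_nonneg_left (le_abs_self K) hspos.le
    have h5 : 0 < s * d := by positivity
    linarith
  have main : (⨆ x, (φ x - suppFn P x)) = φ 0 := by
    apply le_antisymm (ciSup_le key)
    have := le_ciSup (f := fun x => φ x - suppFn P x) ⟨φ 0, by rintro _ ⟨x, rfl⟩; exact key x⟩ 0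
    simpa [h0] using this
  exact ⟨main, by rw [main]⟩
end

section
/- Let P ⊆ ℝⁿ be a convex body. Every sequence (φ_j) of convex functions ℝⁿ → ℝ satisfying φ_j(0) = 0 and φ_j ≤ φ_P on ℝⁿ admits a subsequence that converges uniformly on every compact subset of ℝⁿ to a convex function φ : ℝⁿ → ℝ with φ(0) = 0 and φ ≤ φ_P. -/
open scoped InnerProductSpace
open MeasureTheory

open Filter Topology in
lemma aux_lip {E : Type*} [NormedAddCommGroup E] [NormedSpace ℝ E] (f : E → ℝ) (R : ℝ)
    (hf : ConvexOn ℝ Set.univ f) (h0 : f 0 = 0) (hub : ∀ x, f x ≤ R * ‖x‖) (x y : E) :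
    f y - f x ≤ R * dist y x := by
  have hlow : ∀ x, -(R * ‖x‖) ≤ f x := by
    intro x
    have h := hf.2 (Set.mem_univ x) (Set.mem_univ (-x)) (by norm_num : (0:ℝ) ≤ 1/2)
      (by norm_num : (0:ℝ) ≤ 1/2) (by norm_num)
    have e : (1/2:ℝ) • x + (1/2:ℝ) • (-x) = 0 := by simp
    rw [e, h0] at h
    have h2 := hub (-x)
    rw [norm_neg] at h2
    simp only [smul_eq_mul] at h
    linarith
  have hR : ∀ z : E, 0 ≤ R * ‖z‖ := fun z => by linarith [hlow z, hub z]
  have key : ∀ t : ℝ, 1 ≤ t → f y - f x ≤ R * dist y x + (R * ‖x‖ + R * ‖x‖) / t := by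
    intro t ht
    have ht0 : 0 < t := by linarith
    have h := hf.2 (Set.mem_univ x) (Set.mem_univ (x + t • (y - x)))
      (show (0:ℝ) ≤ 1 - 1/t by rw [sub_nonneg, div_le_one ht0]; exact ht)
      (by positivity : (0:ℝ) ≤ 1/t) (by ring)
    have e : (1 - 1/t) • x + (1/t) • (x + t • (y - x)) = y := by
      rw [smul_add, smul_smul, one_div_mul_cancel ht0.ne']
      module
    rw [e] at h
    simp only [smul_eq_mul] at h
    have hz := hub (x + t • (y - x))
    have hR' : R * ‖x + t • (y - x)‖ ≤ R * ‖x‖ + t * (R * ‖y - x‖) := by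
      by_cases hx : 0 ≤ R
      · have := norm_add_le x (t • (y - x))
        rw [norm_smul, Real.norm_of_nonneg ht0.le] at this
        nlinarith
      · have hz0 : ∀ z : E, ‖z‖ = 0 := fun z => by
          have h1 := hR z
          have h2 := norm_nonneg z
          by_contra h3
          have : 0 < ‖z‖ := lt_of_le_of_ne h2 (Ne.symm h3)
          nlinarith
        simp [hz0]
    rw [dist_eq_norm]
    have h1 : f y - f x ≤ (1/t) * (f (x + t • (y - x)) - f x) := by linarith
    have h2 : (1/t) * (f (x + t • (y - x)) - f x)
        ≤ (1/t) * (R * ‖x‖ + t * (R * ‖y - x‖) + R * ‖x‖) := by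
      apply mul_le_mul_of_nonneg_left _ (by positivity)
      linarith [hlow x]
    refine (h1.trans h2).trans (le_of_eq ?_)
    field_simp
    ring
  have lim : Tendsto (fun t : ℝ => R * dist y x + (R * ‖x‖ + R * ‖x‖) / t) atTop
      (𝓝 (R * dist y x + 0)) :=
    tendsto_const_nhds.add (tendsto_const_nhds.div_atTop tendsto_id)
  rw [add_zero] at lim
  exact ge_of_tendsto lim ((eventually_ge_atTop 1).mono key)

lemma aux_compact {E : Type*} [NormedAddCommGroup E] (R : NNReal) :
    IsCompact {f : C(E, ℝ) | LipschitzWith R f ∧ f 0 = 0} := by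
  apply ArzelaAscoli.isCompact_of_equicontinuous
  · have e : ContinuousMap.toFun '' {f : C(E, ℝ) | LipschitzWith R f ∧ f 0 = 0}
        = {f : E → ℝ | LipschitzWith R f ∧ f 0 = 0} := by
      ext f
      constructor
      · rintro ⟨g, hg, rfl⟩
        exact hg
      · intro hf
        exact ⟨⟨f, hf.1.continuous⟩, hf, rfl⟩
    rw [e]
    refine IsCompact.of_isClosed_subset
      (isCompact_univ_pi fun x : E => isCompact_closedBall (0:ℝ) (R * ‖x‖)) ?_ ?_
    · have : {f : E → ℝ | LipschitzWith R f ∧ f 0 = 0}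
          = (⋂ x, ⋂ y, {f : E → ℝ | dist (f x) (f y) ≤ R * dist x y}) ∩ {f | f 0 = 0} := by
        ext f
        simp [lipschitzWith_iff_dist_le_mul]
      rw [this]
      refine IsClosed.inter (isClosed_iInter fun x => isClosed_iInter fun y => ?_) ?_
      · exact isClosed_le ((continuous_apply x).dist (continuous_apply y)) continuous_const
      · exact isClosed_eq (continuous_apply 0) continuous_const
    · rintro f ⟨hf, hf0⟩ x -
      have := hf.dist_le_mul x 0
      rw [hf0, dist_zero_right x] at this
      exact this
  · exact (LipschitzWith.uniformEquicontinuous _ R fun f => f.2.1).equicontinuous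

/-- Any sequence of convex functions `φ_j` with `φ_j(0) = 0`
and `φ_j ≤ φ_P` admits a subsequence converging uniformly on every compact set
to a convex function `ψ` with `ψ(0) = 0` and `ψ ≤ φ_P`. -/
theorem statement8 {n : ℕ} (P : Set (EuclideanSpace ℝ (Fin n)))
    (hPcomp : IsCompact P) (hPconv : Convex ℝ P)
    (hPint : (interior P).Nonempty)
    (φ : ℕ → EuclideanSpace ℝ (Fin n) → ℝ)
    (hconv : ∀ j, ConvexOn ℝ Set.univ (φ j))
    (h0 : ∀ j, φ j 0 = 0)
    (hub : ∀ j x, φ j x ≤ suppFn P x) :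
    ∃ σ : ℕ → ℕ, StrictMono σ ∧
      ∃ ψ : EuclideanSpace ℝ (Fin n) → ℝ,
        ConvexOn ℝ Set.univ ψ ∧ ψ 0 = 0 ∧ (∀ x, ψ x ≤ suppFn P x) ∧
        ∀ K : Set (EuclideanSpace ℝ (Fin n)), IsCompact K →
          TendstoUniformlyOn (fun j => φ (σ j)) ψ Filter.atTop K := by
  obtain ⟨R, hR⟩ := hPcomp.isBounded.exists_norm_le
  obtain ⟨p0, hp0⟩ := hPint
  have hp0P : p0 ∈ P := interior_subset hp0
  have hR0 : 0 ≤ R := (norm_nonneg _).trans (hR p0 hp0P)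
  haveI : Nonempty P := ⟨⟨p0, hp0P⟩⟩
  have hs : ∀ x, suppFn P x ≤ R * ‖x‖ := by
    intro x
    refine ciSup_le fun p => (real_inner_le_norm _ _).trans ?_
    rw [mul_comm]
    exact mul_le_mul_of_nonneg_right (hR p p.2) (norm_nonneg _)
  have hlip : ∀ j, LipschitzWith ⟨R, hR0⟩ (φ j) := fun j =>
    LipschitzWith.of_le_add_mul _ fun x y => by
      have := aux_lip (φ j) R (hconv j) (h0 j) (fun x => (hub j x).trans (hs x)) y x
      show φ j x ≤ φ j y + R * dist x y
      linarith
  let F : ℕ → C(EuclideanSpace ℝ (Fin n), ℝ) := fun j => ⟨φ j, (hlip j).continuous⟩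
  obtain ⟨g, hg, σ, hσ, hlim⟩ := (aux_compact ⟨R, hR0⟩).tendsto_subseq
    (x := F) (fun j => ⟨hlip j, h0 j⟩)
  rw [ContinuousMap.tendsto_iff_forall_isCompact_tendstoUniformlyOn] at hlim
  have hpt : ∀ x, Filter.Tendsto (fun j => φ (σ j) x) Filter.atTop (nhds (g x)) := fun x =>
    (hlim {x} isCompact_singleton).tendsto_at (Set.mem_singleton x)
  refine ⟨σ, hσ, g, ⟨convex_univ, ?_⟩, hg.2, ?_, hlim⟩
  · intro x _ y _ a b ha hb hab
    exact le_of_tendsto_of_tendsto' (hpt _) (((hpt x).const_smul a).add ((hpt y).const_smul b))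
      fun j => (hconv (σ j)).2 (Set.mem_univ x) (Set.mem_univ y) ha hb hab
  · intro x
    exact le_of_tendsto' (hpt x) fun j => hub (σ j) x
end

section
/- Let P ⊆ ℝⁿ be a convex body and let φ : ℝⁿ → ℝ be a convex function satisfying φ ≤ φ_P + C on ℝⁿ for some constant C. Then there exists a sequence (φ_j) of smooth, strictly convex functions on ℝⁿ, each satisfying that φ_j − φ_P is bounded on ℝⁿ, such that φ_j decreases pointwise to φ as j → ∞. -/
open scoped InnerProductSpace
open MeasureTheory

theorem aux_sqrt_strict {F : Type*} [NormedAddCommGroup F] [InnerProductSpace ℝ F] :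
    StrictConvexOn ℝ Set.univ (fun x : F => Real.sqrt (1 + ‖x‖ ^ 2)) := by
  refine ⟨convex_univ, ?_⟩
  intro x _ y _ hxy a b ha hb hab
  simp only [smul_eq_mul]
  have hp : 0 < Real.sqrt (1 + ‖x‖ ^ 2) := Real.sqrt_pos.2 (by positivity)
  have hq : 0 < Real.sqrt (1 + ‖y‖ ^ 2) := Real.sqrt_pos.2 (by positivity)
  have hp2 : Real.sqrt (1 + ‖x‖ ^ 2) ^ 2 = 1 + ‖x‖ ^ 2 := Real.sq_sqrt (by positivity)
  have hq2 : Real.sqrt (1 + ‖y‖ ^ 2) ^ 2 = 1 + ‖y‖ ^ 2 := Real.sq_sqrt (by positivity)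
  set p := Real.sqrt (1 + ‖x‖ ^ 2)
  set q := Real.sqrt (1 + ‖y‖ ^ 2)
  have hd : 0 < ‖x - y‖ ^ 2 := by
    have : 0 < ‖x - y‖ := norm_pos_iff.2 (sub_ne_zero.2 hxy)
    positivity
  rw [norm_sub_sq_real] at hd
  have hcs : ⟪x, y⟫_ℝ ^ 2 ≤ ‖x‖ ^ 2 * ‖y‖ ^ 2 := by
    have := abs_real_inner_le_norm x y
    rw [← mul_pow, ← sq_abs]
    gcongr
  have key : 1 + ⟪x, y⟫_ℝ < p * q := by
    apply lt_of_pow_lt_pow_left₀ 2 (by positivity)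
    rw [mul_pow, hp2, hq2]
    nlinarith
  rw [Real.sqrt_lt' (by positivity), norm_add_sq_real, norm_smul, norm_smul,
    real_inner_smul_left, real_inner_smul_right, mul_pow, mul_pow, Real.norm_eq_abs,
    Real.norm_eq_abs, sq_abs, sq_abs]
  have e1 : (1 : ℝ) = (a + b) ^ 2 := by rw [hab]; norm_num
  have h2 : 0 < a * b * (p * q - (1 + ⟪x, y⟫_ℝ)) := by
    have : 0 < p * q - (1 + ⟪x, y⟫_ℝ) := by linarith
    positivity
  have e2 : (a * p + b * q) ^ 2 = a ^ 2 * p ^ 2 + b ^ 2 * q ^ 2 + 2 * (a * b) * (p * q) := by ring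
  rw [e2, hp2, hq2]
  nlinarith

/-- one-variable smoothing of the absolute value -/
noncomputable def auxS (t : ℝ) : ℝ := Real.sqrt (1 + t ^ 2)

theorem auxS_contDiff : ContDiff ℝ (⊤ : ℕ∞) auxS := by
  unfold auxS
  apply ContDiff.sqrt
  · fun_prop
  · intro x; positivity

theorem auxS_convex (t r a b : ℝ) (ha : 0 ≤ a) (hb : 0 ≤ b) (hab : a + b = 1) :
    auxS (a * t + b * r) ≤ a * auxS t + b * auxS r := by
  have := (aux_sqrt_strict (F := ℝ)).convexOn.2 (Set.mem_univ t) (Set.mem_univ r) ha hb hab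
  simpa [auxS] using this

theorem auxS_lip (t r : ℝ) (h : t ≠ r) : auxS t - auxS r < |t - r| := by
  unfold auxS
  have hr2 : Real.sqrt (1 + r ^ 2) ^ 2 = 1 + r ^ 2 := Real.sq_sqrt (by positivity)
  have hr : |r| < Real.sqrt (1 + r ^ 2) := by
    apply Real.lt_sqrt_of_sq_lt; rw [sq_abs]; linarith
  have hr0 := abs_nonneg r
  set q := Real.sqrt (1 + r ^ 2)
  have hd : 0 < |t - r| := abs_pos.2 (sub_ne_zero.2 h)
  have : Real.sqrt (1 + t ^ 2) < |t - r| + q := by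
    rw [Real.sqrt_lt' (by positivity)]
    have e : (|t - r| + q) ^ 2 = |t - r| ^ 2 + 2 * (|t - r| * q) + q ^ 2 := by ring
    rw [e, sq_abs, hr2]
    have h1 : |t - r| * |r| < |t - r| * q := by gcongr
    have h2 : (t - r) * r ≤ |t - r| * |r| := by rw [← abs_mul]; exact le_abs_self _
    nlinarith
  linarith

/-- smooth maximum -/
noncomputable def auxM (a b : ℝ) : ℝ := (a + b + auxS (a - b)) / 2

theorem auxM_lt {a a' b b' : ℝ} (h1 : a ≤ a') (h2 : b < b') : auxM a b < auxM a' b' := by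
  unfold auxM
  by_cases h : a - b = a' - b'
  · rw [h]; linarith
  · have := auxS_lip _ _ h
    have h3 : |a - b - (a' - b')| ≤ (a' - a) + (b' - b) := by
      rw [abs_le]; constructor <;> linarith
    linarith

theorem auxM_ge_left (a b : ℝ) : a ≤ auxM a b := by
  unfold auxM auxS
  have : |a - b| ≤ Real.sqrt (1 + (a - b) ^ 2) := by
    apply Real.le_sqrt_of_sq_le; rw [sq_abs]; linarith
  have := le_abs_self (a - b)
  linarith

theorem auxM_le (a b c : ℝ) (ha : a ≤ c) (hb : b ≤ c) : auxM a b ≤ c + 1 / 2 := by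
  unfold auxM auxS
  have : Real.sqrt (1 + (a - b) ^ 2) ≤ |a - b| + 1 := by
    rw [Real.sqrt_le_left (by positivity)]
    have := sq_abs (a - b)
    have := abs_nonneg (a - b)
    nlinarith
  rcases le_total 0 (a - b) with h | h
  · rw [abs_of_nonneg h] at this; linarith
  · rw [abs_of_nonpos h] at this; linarith

theorem auxM_strict {F : Type*} [NormedAddCommGroup F] [NormedSpace ℝ F]
    {f u : F → ℝ} (hf : ConvexOn ℝ Set.univ f) (hu : StrictConvexOn ℝ Set.univ u) :
    StrictConvexOn ℝ Set.univ (fun x => auxM (f x) (u x)) := by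
  refine ⟨convex_univ, ?_⟩
  intro x hx y hy hxy a b ha hb hab
  have h1 := hf.2 hx hy ha.le hb.le hab
  have h2 := hu.2 hx hy hxy ha hb hab
  simp only [smul_eq_mul] at h1 h2 ⊢
  refine (auxM_lt h1 h2).trans_le ?_
  have := auxS_convex (f x - u x) (f y - u y) a b ha.le hb.le hab
  have e : a * f x + b * f y - (a * u x + b * u y)
    = a * (f x - u x) + b * (f y - u y) := by ring
  unfold auxM
  rw [e]
  linarith

section
variable {n : ℕ}
local notation "𝔼" => EuclideanSpace ℝ (Fin n)

theorem aux_bdd {P : Set 𝔼} (hP : IsCompact P) : ∃ L : ℝ, 0 ≤ L ∧ ∀ p ∈ P, ‖p‖ ≤ L := by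
  obtain ⟨L, hL⟩ := hP.isBounded.exists_norm_le
  exact ⟨max L 0, le_max_right _ _, fun p hp => (hL p hp).trans (le_max_left _ _)⟩

theorem aux_bddAbove {P : Set 𝔼} (hP : IsCompact P) (x : 𝔼) :
    BddAbove (Set.range fun p : P => ⟪x, (p : 𝔼)⟫_ℝ) := by
  obtain ⟨L, h0, hL⟩ := aux_bdd hP
  refine ⟨‖x‖ * L, ?_⟩
  rintro _ ⟨p, rfl⟩
  refine (real_inner_le_norm _ _).trans ?_
  gcongr
  exact hL p p.2

theorem aux_le_supp {P : Set 𝔼} (hP : IsCompact P) (x p : 𝔼) (hp : p ∈ P) :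
    ⟪x, p⟫_ℝ ≤ suppFn P x :=
  le_ciSup (aux_bddAbove hP x) (⟨p, hp⟩ : P)

theorem aux_supp_le {P : Set 𝔼} (hne : P.Nonempty) (x : 𝔼) (c : ℝ)
    (h : ∀ p ∈ P, ⟪x, p⟫_ℝ ≤ c) : suppFn P x ≤ c := by
  haveI := hne.to_subtype
  exact ciSup_le fun p => h p p.2

theorem aux_supp_add {P : Set 𝔼} (hP : IsCompact P) (hne : P.Nonempty) (x y : 𝔼) :
    suppFn P (x + y) ≤ suppFn P x + suppFn P y := by
  apply aux_supp_le hne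
  intro p hp
  rw [inner_add_left]
  exact add_le_add (aux_le_supp hP x p hp) (aux_le_supp hP y p hp)

theorem aux_supp_smul {P : Set 𝔼} (hP : IsCompact P) (hne : P.Nonempty) (x : 𝔼) (t : ℝ)
    (ht : 0 ≤ t) : suppFn P (t • x) ≤ t * suppFn P x := by
  apply aux_supp_le hne
  intro p hp
  rw [real_inner_smul_left]
  exact mul_le_mul_of_nonneg_left (aux_le_supp hP x p hp) ht

theorem aux_supp_convex {P : Set 𝔼} (hP : IsCompact P) (hne : P.Nonempty) :
    ConvexOn ℝ Set.univ (suppFn P) := by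
  refine ⟨convex_univ, ?_⟩
  intro x _ y _ a b ha hb hab
  exact (aux_supp_add hP hne _ _).trans
    (add_le_add (aux_supp_smul hP hne x a ha) (aux_supp_smul hP hne y b hb))

theorem aux_step {P : Set 𝔼} (hP : IsCompact P) (hne : P.Nonempty) {ψ : 𝔼 → ℝ}
    (hψ : ConvexOn ℝ Set.univ ψ) {C : ℝ} (hub : ∀ x, ψ x ≤ suppFn P x + C) (x v : 𝔼) :
    ψ (x + v) ≤ ψ x + suppFn P v := by
  by_contra! hcon
  set d := ψ (x + v) - ψ x - suppFn P v with hd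
  have hd0 : 0 < d := by linarith
  -- for t ≥ 1 : t * (ψ (x+v) - ψ x) ≤ ψ (x + t v) - ψ x
  set K := suppFn P x + C - ψ x
  obtain ⟨t, ht⟩ : ∃ t : ℝ, 1 ≤ t ∧ K < t * d := by
    refine ⟨max 1 (K / d + 1), le_max_left _ _, ?_⟩
    have : K / d < max 1 (K / d + 1) := lt_of_lt_of_le (by linarith) (le_max_right _ _)
    rwa [div_lt_iff₀ hd0] at this
  obtain ⟨ht1, ht2⟩ := ht
  have ht0 : 0 < t := by linarith
  have hc := hψ.2 (Set.mem_univ x) (Set.mem_univ (x + t • v)) 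
    (show 0 ≤ 1 - t⁻¹ by have := inv_le_one_of_one_le₀ ht1; linarith)
    (show 0 ≤ t⁻¹ by positivity) (by ring)
  have e : (1 - t⁻¹) • x + t⁻¹ • (x + t • v) = x + v := by
    rw [smul_add, smul_smul, inv_mul_cancel₀ ht0.ne']; module
  rw [e] at hc
  simp only [smul_eq_mul] at hc
  have h1 : ψ (x + t • v) ≤ suppFn P x + t * suppFn P v + C := by
    have := hub (x + t • v)
    have := aux_supp_add hP hne x (t • v)
    have := aux_supp_smul hP hne v t ht0.le
    linarith
  have h2 : t * ψ (x + v) ≤ (t - 1) * ψ x + ψ (x + t • v) := by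
    have := mul_le_mul_of_nonneg_left hc ht0.le
    have e : t * ((1 - t⁻¹) * ψ x + t⁻¹ * ψ (x + t • v))
        = (t - 1) * ψ x + ψ (x + t • v) := by field_simp
    linarith
  have : t * d = t * ψ (x + v) - t * ψ x - t * suppFn P v := by rw [hd]; ring
  simp only [K] at ht2
  linarith

theorem aux_lip_s9 {P : Set 𝔼} (hP : IsCompact P) (hne : P.Nonempty) {L : ℝ} (hL0 : 0 ≤ L)
    (hL : ∀ p ∈ P, ‖p‖ ≤ L) {ψ : 𝔼 → ℝ}
    (hψ : ConvexOn ℝ Set.univ ψ) {C : ℝ} (hub : ∀ x, ψ x ≤ suppFn P x + C) :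
    LipschitzWith L.toNNReal ψ := by
  apply LipschitzWith.of_le_add_mul
  intro x y
  have := aux_step hP hne hψ hub y (x - y)
  rw [add_sub_cancel] at this
  refine this.trans ?_
  gcongr
  apply aux_supp_le hne
  intro p hp
  rw [Real.coe_toNNReal _ hL0, dist_eq_norm, mul_comm]
  refine (real_inner_le_norm _ _).trans ?_
  gcongr
  exact hL p hp

theorem aux_mollify {ψ : 𝔼 → ℝ} {K : NNReal} (hl : LipschitzWith K ψ)
    (hψ : ConvexOn ℝ Set.univ ψ) {a b : ℝ} (hab : a < b) :
    ∃ A : 𝔼 → ℝ, ContDiff ℝ (⊤ : ℕ∞) A ∧ ConvexOn ℝ Set.univ A ∧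
      ∀ x, ψ x + a ≤ A x ∧ A x ≤ ψ x + b := by
  set η := (b - a) / 2 with hη
  have hη0 : 0 < η := by rw [hη]; linarith
  set δ : ℝ := η / (K + 1) with hδ
  have hK : (0 : ℝ) ≤ K := K.2
  have hδ0 : 0 < δ := by positivity
  let B : ContDiffBump (0 : 𝔼) := ⟨δ / 2, δ, by positivity, by linarith⟩
  let A : 𝔼 → ℝ := convolution (B.normed volume) ψ (ContinuousLinearMap.lsmul ℝ ℝ) volume
  have hint : ∀ x, Integrable (fun t => B.normed volume t * ψ (x - t)) volume := by
    intro x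
    apply Continuous.integrable_of_hasCompactSupport
    · exact B.continuous_normed.mul (hl.continuous.comp (continuous_const.sub continuous_id))
    · exact B.hasCompactSupport_normed.mul_right
  have hA : ∀ x, A x = ∫ t, B.normed volume t * ψ (x - t) := fun x => rfl
  have hsm : ContDiff ℝ (⊤ : ℕ∞) A :=
    HasCompactSupport.contDiff_convolution_left _ B.hasCompactSupport_normed
      B.contDiff_normed hl.continuous.locallyIntegrable
  have hcv : ConvexOn ℝ Set.univ A := by
    refine ⟨convex_univ, ?_⟩
    intro x _ y _ s t hs ht hst
    simp only [hA, smul_eq_mul]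
    rw [← integral_const_mul, ← integral_const_mul,
      ← integral_add ((hint x).const_mul s) ((hint y).const_mul t)]
    apply integral_mono (hint _) (((hint x).const_mul s).add ((hint y).const_mul t))
    intro z
    have h := hψ.2 (Set.mem_univ (x - z)) (Set.mem_univ (y - z)) hs ht hst
    have e : s • (x - z) + t • (y - z) = s • x + t • y - z := by
      have : z = (s + t) • z := by rw [hst, one_smul]
      conv_rhs => rw [this]
      module
    rw [e] at h
    simp only [smul_eq_mul] at h
    have := mul_le_mul_of_nonneg_left h (B.nonneg_normed (μ := volume) z)
    simp only [Pi.add_apply]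
    linarith
  have hd : ∀ x, dist (A x) (ψ x) ≤ η := by
    intro x
    apply B.dist_normed_convolution_le hl.continuous.aestronglyMeasurable
    intro y hy
    refine (hl.dist_le_mul y x).trans ?_
    have : dist y x ≤ δ := (Metric.mem_ball.1 hy).le
    calc (K : ℝ) * dist y x ≤ (K + 1) * δ := by gcongr; linarith
      _ = η := by rw [hδ]; field_simp
  refine ⟨fun x => A x + (a + b) / 2, hsm.add contDiff_const, hcv.add_const _, ?_⟩
  intro x
  have := hd x
  rw [Real.dist_eq, abs_le] at this
  constructor <;> linarith

theorem aux_g {P : Set 𝔼} (hP : IsCompact P) (hPint : (interior P).Nonempty) {L : ℝ}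
    (hL0 : 0 ≤ L) (hL : ∀ p ∈ P, ‖p‖ ≤ L) :
    ∃ g : 𝔼 → ℝ, ContDiff ℝ (⊤ : ℕ∞) g ∧ StrictConvexOn ℝ Set.univ g ∧
      ∃ D, ∀ x, suppFn P x ≤ g x ∧ g x ≤ suppFn P x + D := by
  have hne : P.Nonempty := hPint.mono interior_subset
  obtain ⟨f, hf1, hf2, hf3⟩ := aux_mollify
    (aux_lip_s9 hP hne hL0 hL (aux_supp_convex hP hne) (C := 0) (by simp))
    (aux_supp_convex hP hne) (zero_lt_one)
  obtain ⟨p0, hp0⟩ := hPint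
  obtain ⟨ε, hε, hball⟩ := Metric.isOpen_iff.1 isOpen_interior p0 hp0
  set r := ε / 2 with hr
  have hr0 : 0 < r := by positivity
  let u : 𝔼 → ℝ := fun x => ⟪x, p0⟫_ℝ + r * Real.sqrt (1 + ‖x‖ ^ 2)
  have hu1 : ContDiff ℝ (⊤ : ℕ∞) u := by
    apply ContDiff.add
    · exact contDiff_id.inner ℝ contDiff_const
    · apply contDiff_const.mul
      apply ContDiff.sqrt
      · exact contDiff_const.add (contDiff_norm_sq ℝ)
      · intro x; positivity
  have hu2 : StrictConvexOn ℝ Set.univ u := by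
    refine ⟨convex_univ, ?_⟩
    intro x hx y hy hxy a b ha hb hab
    have := (aux_sqrt_strict (F := 𝔼)).2 hx hy hxy ha hb hab
    have := mul_lt_mul_of_pos_left this hr0
    simp only [u, smul_eq_mul, inner_add_left, real_inner_smul_left] at this ⊢
    linarith
  have hu3 : ∀ x, u x ≤ suppFn P x + r := by
    intro x
    have h1 : Real.sqrt (1 + ‖x‖ ^ 2) ≤ ‖x‖ + 1 := by
      rw [Real.sqrt_le_left (by positivity)]
      have := norm_nonneg x
      nlinarith
    have h2 : ⟪x, p0⟫_ℝ + r * ‖x‖ ≤ suppFn P x := by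
      have hm : p0 + (r / ‖x‖) • x ∈ P := by
        apply interior_subset
        apply hball
        rw [Metric.mem_ball, dist_eq_norm, add_sub_cancel_left, norm_smul, Real.norm_eq_abs,
          abs_of_nonneg (by positivity)]
        by_cases hx : ‖x‖ = 0
        · rw [hx]; simpa using hε
        · rw [div_mul_cancel₀ _ hx]; linarith
      have := aux_le_supp hP x _ hm
      rw [inner_add_right, real_inner_smul_right, real_inner_self_eq_norm_sq] at this
      have e : r / ‖x‖ * ‖x‖ ^ 2 = r * ‖x‖ := by
        by_cases hx : ‖x‖ = 0
        · simp [hx]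
        · field_simp
      linarith
    have := mul_le_mul_of_nonneg_left h1 hr0.le
    simp only [u]
    linarith
  refine ⟨fun x => auxM (f x) (u x), ?_, auxM_strict hf2 hu2, 1 + r + 1 / 2, ?_⟩
  · unfold auxM
    exact ((hf1.add hu1).add (auxS_contDiff.comp (hf1.sub hu1))).div_const 2
  · intro x
    have := hf3 x
    have := hu3 x
    refine ⟨by linarith [auxM_ge_left (f x) (u x)], ?_⟩
    have := auxM_le (f x) (u x) (suppFn P x + (1 + r)) (by linarith) (by linarith)
    linarith

end

/-- (Regularization.) Any convex `φ` with `φ ≤ φ_P + C` is the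
pointwise decreasing limit of smooth, strictly convex functions `φ_j` such that
each `φ_j - φ_P` is bounded on `ℝⁿ`. -/
theorem statement9 {n : ℕ} (P : Set (EuclideanSpace ℝ (Fin n)))
    (hPcomp : IsCompact P) (hPconv : Convex ℝ P)
    (hPint : (interior P).Nonempty)
    (φ : EuclideanSpace ℝ (Fin n) → ℝ)
    (hφconv : ConvexOn ℝ Set.univ φ)
    (C : ℝ) (hub : ∀ x, φ x ≤ suppFn P x + C) :
    ∃ φseq : ℕ → EuclideanSpace ℝ (Fin n) → ℝ,
      (∀ j, ContDiff ℝ (⊤ : ℕ∞) (φseq j)) ∧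
      (∀ j, StrictConvexOn ℝ Set.univ (φseq j)) ∧
      (∀ j, ∃ M : ℝ, ∀ x, |φseq j x - suppFn P x| ≤ M) ∧
      (∀ x, Antitone fun j => φseq j x) ∧
      (∀ x, Filter.Tendsto (fun j => φseq j x) Filter.atTop (nhds (φ x))) := by
  have hne : P.Nonempty := hPint.mono interior_subset
  obtain ⟨L, hL0, hL⟩ := aux_bdd hPcomp
  obtain ⟨g, hg1, hg2, D, hg3⟩ := aux_g hPcomp hPint hL0 hL
  let ψ : ℕ → EuclideanSpace ℝ (Fin n) → ℝ := fun j x => max (φ x) (suppFn P x - j)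
  have hψ1 : ∀ j, ConvexOn ℝ Set.univ (ψ j) := fun j =>
    hφconv.sup ((aux_supp_convex hPcomp hne).add_const (-(j : ℝ)))
  have hψ2 : ∀ j x, ψ j x ≤ suppFn P x + |C| := by
    intro j x
    have := hub x
    have := le_abs_self C
    have := abs_nonneg C
    have : (0 : ℝ) ≤ j := j.cast_nonneg
    exact max_le (by linarith) (by linarith)
  have hψ3 : ∀ j x, suppFn P x - j ≤ ψ j x := fun j x => le_max_right _ _
  have hψ4 : ∀ j x, ψ (j + 1) x ≤ ψ j x := by
    intro j x
    apply max_le_max le_rfl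
    push_cast; linarith
  let e : ℕ → ℝ := fun j => 1 / ((j : ℝ) + 1)
  have he0 : ∀ j, 0 < e j := fun j => by positivity
  have he1 : ∀ j, e j ≤ 1 := fun j => by
    have : (0 : ℝ) ≤ j := j.cast_nonneg
    simp only [e]
    rw [div_le_one (by positivity)]; linarith
  have he2 : ∀ j, e (j + 1) < e j := fun j => by
    simp only [e]
    apply one_div_lt_one_div_of_lt (by positivity)
    push_cast; linarith
  have he3 : Filter.Tendsto e Filter.atTop (nhds 0) := tendsto_one_div_add_atTop_nhds_zero_nat
  have hex := fun j => aux_mollify (aux_lip_s9 hPcomp hne hL0 hL (hψ1 j) (hψ2 j)) (hψ1 j) (he2 j)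
  choose A hA1 hA2 hA3 using hex
  have hA4 : ∀ j x, A (j + 1) x ≤ A j x := by
    intro j x
    have := (hA3 j x).1
    have := (hA3 (j + 1) x).2
    have := hψ4 j x
    linarith
  have hA5 : ∀ j x, A j x ≤ suppFn P x + (|C| + 1) := by
    intro j x
    have := (hA3 j x).2
    have := hψ2 j x
    have := he1 j
    linarith
  have hA6 : ∀ j x, suppFn P x - j ≤ A j x := by
    intro j x
    have := (hA3 j x).1
    have := hψ3 j x
    have := he0 (j + 1)
    linarith
  have hAt : ∀ x, Filter.Tendsto (fun j => A j x) Filter.atTop (nhds (φ x)) := by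
    intro x
    have hup : Filter.Tendsto (fun j => φ x + e j) Filter.atTop (nhds (φ x)) := by
      simpa using he3.const_add (φ x)
    refine tendsto_of_tendsto_of_tendsto_of_le_of_le' tendsto_const_nhds hup ?_ ?_
    · filter_upwards with j
      have := (hA3 j x).1
      have := he0 (j + 1)
      have : φ x ≤ ψ j x := le_max_left _ _
      linarith
    · obtain ⟨N, hN⟩ := exists_nat_ge (suppFn P x - φ x)
      filter_upwards [Filter.eventually_ge_atTop N] with j hj
      have h1 : (N : ℝ) ≤ j := by exact_mod_cast hj
      have : ψ j x = φ x := max_eq_left (by linarith)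
      have := (hA3 j x).2
      linarith
  let G : EuclideanSpace ℝ (Fin n) → ℝ := fun x => g x + (|C| + 1)
  have hC := abs_nonneg C
  have hG : ∀ j x, A j x ≤ G x := fun j x => by
    have := hA5 j x
    have := (hg3 x).1
    simp only [G]; linarith
  -- weights `e (j+1)` lie strictly between 0 and 1
  have he4 : ∀ j, e (j + 1) < 1 := fun j => (he2 j).trans_le (he1 j)
  refine ⟨fun j x => (1 - e (j + 1)) * A j x + e (j + 1) * G x, ?_, ?_, ?_, ?_, ?_⟩
  · intro j
    exact (contDiff_const.mul (hA1 j)).add (contDiff_const.mul (hg1.add contDiff_const))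
  · intro j
    refine ⟨convex_univ, ?_⟩
    intro x hx y hy hxy a b ha hb hab
    have h1 := (hA2 j).2 hx hy ha.le hb.le hab
    have h2 := hg2.2 hx hy hxy ha hb hab
    simp only [smul_eq_mul] at h1 h2 ⊢
    have h3 := mul_le_mul_of_nonneg_left h1 (sub_nonneg.2 (he1 (j + 1)))
    have h4 := mul_lt_mul_of_pos_left h2 (he0 (j + 1))
    have h5 : e (j + 1) * (|C| + 1) = a * (e (j + 1) * (|C| + 1)) + b * (e (j + 1) * (|C| + 1)) := by
      rw [← add_mul, hab, one_mul]
    simp only [G]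
    linarith
  · intro j
    refine ⟨(j : ℝ) + |D| + (|C| + 1), fun x => ?_⟩
    have h1 := hA5 j x
    have h2 := hA6 j x
    have h3 := hg3 x
    have h4 := le_abs_self D
    have h5 := abs_nonneg D
    have h6 : (0 : ℝ) ≤ j := j.cast_nonneg
    have h7 : A j x ≤ (1 - e (j + 1)) * A j x + e (j + 1) * G x := by
      have := mul_le_mul_of_nonneg_left (hG j x) (he0 (j + 1)).le
      linarith
    have h8 : (1 - e (j + 1)) * A j x + e (j + 1) * G x ≤ G x := by
      have := mul_le_mul_of_nonneg_left (hG j x) (sub_nonneg.2 (he1 (j + 1)))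
      linarith
    have h9 : G x = g x + (|C| + 1) := rfl
    rw [abs_le]
    constructor <;> linarith
  · intro x
    apply antitone_nat_of_succ_le
    intro j
    have h1 := mul_le_mul_of_nonneg_left (hA4 j x) (sub_nonneg.2 (he1 (j + 1 + 1)))
    have h2 := mul_nonneg (sub_nonneg.2 (he2 (j + 1)).le) (sub_nonneg.2 (hG j x))
    have h3 : (e (j + 1) - e (j + 1 + 1)) * (G x - A j x) =
      ((1 - e (j + 1)) * A j x + e (j + 1) * G x)
       - ((1 - e (j + 1 + 1)) * A j x + e (j + 1 + 1) * G x) := by ring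
    linarith
  · intro x
    have he5 : Filter.Tendsto (fun j => e (j + 1)) Filter.atTop (nhds 0) :=
      he3.comp (Filter.tendsto_add_atTop_nat 1)
    have := ((he5.const_sub 1).mul (hAt x)).add (he5.mul_const (G x))
    simpa using this
end

section
/- Let G₀ : ℝⁿ → ℝ be an upper semicontinuous function such that G₀(x) → −∞ as ‖x‖ → ∞ and such that G₀ attains its supremum at a unique point x₀ ∈ ℝⁿ. Let v : ℝⁿ → ℝ be a bounded continuous function. Then the function g(t) := sup_{x ∈ ℝⁿ} (G₀(x) + t·v(x)) is differentiable at t = 0 and g'(0) = v(x₀). -/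
open scoped InnerProductSpace
open MeasureTheory

/-- If `G₀` is upper semicontinuous, tends to `-∞` at
infinity and has a unique maximizer `x₀`, and `v` is bounded and continuous,
then `g(t) := sup_x (G₀(x) + t v(x))` is differentiable at `t = 0` with
`g'(0) = v(x₀)`. -/
theorem statement10 {n : ℕ} (G₀ : EuclideanSpace ℝ (Fin n) → ℝ)
    (husc : UpperSemicontinuous G₀)
    (hproper : Filter.Tendsto G₀ (Filter.cocompact (EuclideanSpace ℝ (Fin n))) Filter.atBot)
    (x₀ : EuclideanSpace ℝ (Fin n))
    (hmax : ∀ x, G₀ x ≤ G₀ x₀)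
    (huniq : ∀ x, G₀ x = G₀ x₀ → x = x₀)
    (v : EuclideanSpace ℝ (Fin n) → ℝ)
    (hv : Continuous v) (hvb : ∃ M : ℝ, ∀ x, |v x| ≤ M) :
    HasDerivAt (fun t : ℝ => ⨆ x, (G₀ x + t * v x)) (v x₀) 0 := by
  obtain ⟨M, hM⟩ := hvb
  have hM0 : 0 ≤ M := (abs_nonneg _).trans (hM x₀)
  have key : ∀ c : ℝ, 0 < c → ∃ δ : ℝ, 0 < δ ∧ ∀ x, c ≤ |v x - v x₀| → G₀ x ≤ G₀ x₀ - δ := by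
    intro c hc
    have h1 : ∀ᶠ x in Filter.cocompact (EuclideanSpace ℝ (Fin n)), G₀ x ≤ G₀ x₀ - 1 :=
      hproper.eventually (Filter.eventually_le_atBot _)
    obtain ⟨S, hS, hS'⟩ := Filter.mem_cocompact.1 h1
    have hcl : IsClosed {x | c ≤ |v x - v x₀|} :=
      isClosed_le continuous_const (by fun_prop)
    have hK : IsCompact (S ∩ {x | c ≤ |v x - v x₀|}) := hS.inter_right hcl
    rcases (S ∩ {x | c ≤ |v x - v x₀|}).eq_empty_or_nonempty with he | hne
    · refine ⟨1, one_pos, fun x hx => ?_⟩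
      apply hS'
      intro hxS
      have : x ∈ S ∩ {x | c ≤ |v x - v x₀|} := ⟨hxS, hx⟩
      rw [he] at this
      exact this
    · obtain ⟨a, ha, hamax⟩ := (husc.upperSemicontinuousOn _).exists_isMaxOn hne hK
      have hlt : G₀ a < G₀ x₀ := by
        refine lt_of_le_of_ne (hmax a) fun h => ?_
        have h2 := ha.2
        rw [huniq a h] at h2
        simp at h2
        linarith
      refine ⟨min 1 (G₀ x₀ - G₀ a), lt_min one_pos (by linarith), fun x hx => ?_⟩
      by_cases hxS : x ∈ S
      · have h3 : G₀ x ≤ G₀ a := hamax ⟨hxS, hx⟩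
        have := min_le_right 1 (G₀ x₀ - G₀ a)
        linarith
      · have h3 : G₀ x ≤ G₀ x₀ - 1 := hS' hxS
        have := min_le_left 1 (G₀ x₀ - G₀ a)
        linarith
  have hbd : ∀ t : ℝ, BddAbove (Set.range fun x => G₀ x + t * v x) := by
    intro t
    refine ⟨G₀ x₀ + |t| * M, ?_⟩
    rintro _ ⟨x, rfl⟩
    have h1 : t * v x ≤ |t| * M := (le_abs_self _).trans (by rw [abs_mul]; gcongr; exact hM x)
    have := hmax x
    show G₀ x + t * v x ≤ _
    linarith
  have hlow : ∀ t : ℝ, G₀ x₀ + t * v x₀ ≤ ⨆ x, (G₀ x + t * v x) := fun t => le_ciSup (hbd t) x₀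
  have h0 : (⨆ x, (G₀ x + (0:ℝ) * v x)) = G₀ x₀ := by
    apply le_antisymm
    · exact ciSup_le fun x => by simpa using hmax x
    · simpa using hlow 0
  rw [hasDerivAt_iff_isLittleO, Asymptotics.isLittleO_iff]
  intro c hc
  obtain ⟨δ, hδ, hK⟩ := key c hc
  have hr : 0 < δ / (2 * M + 1) := by positivity
  filter_upwards [Metric.ball_mem_nhds (0:ℝ) hr] with t ht
  rw [mem_ball_zero_iff, Real.norm_eq_abs, lt_div_iff₀ (by positivity)] at ht
  have hup : (⨆ x, (G₀ x + t * v x)) ≤ G₀ x₀ + t * v x₀ + c * |t| := by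
    refine ciSup_le fun x => ?_
    have h1 : t * (v x - v x₀) ≤ |t| * |v x - v x₀| := by
      rw [← abs_mul]; exact le_abs_self _
    have ht0 := abs_nonneg t
    rcases le_total c |v x - v x₀| with h | h
    · have h2 := hK x h
      have h3 : |v x - v x₀| ≤ 2 * M := by
        have := abs_sub (v x) (v x₀)
        linarith [hM x, hM x₀]
      have h4 := mul_le_mul_of_nonneg_left h3 ht0
      have := mul_nonneg hc.le ht0
      nlinarith
    · have h4 := mul_le_mul_of_nonneg_left h ht0
      have := hmax x
      nlinarith
  have hl := hlow t
  simp only [h0, sub_zero, smul_eq_mul, Real.norm_eq_abs]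
  rw [abs_of_nonneg (by linarith)]
  linarith
end

section
/- Let P ⊆ ℝⁿ be a convex body containing 0 in its interior, let φ : ℝⁿ → ℝ be convex with φ − φ_P bounded on ℝⁿ, and let v : ℝⁿ → ℝ be a bounded continuous function. For t ∈ ℝ define f(t) := ∫_P (φ + t·v)*(p) dp, where (φ + t·v)*(p) = sup_{x ∈ ℝⁿ}(⟨p, x⟩ − φ(x) − t·v(x)). Then f is differentiable at t = 0 and f'(0) = − ∫_P v(∇φ*(p)) dp, where ∇φ*(p) denotes the gradient of the convex function φ*, which exists for Lebesgue-almost every p ∈ P. -/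
open scoped InnerProductSpace
open MeasureTheory

open Filter Topology in
theorem aux_sep {n : ℕ} (P : Set (EuclideanSpace ℝ (Fin n)))
    (φ : EuclideanSpace ℝ (Fin n) → ℝ)
    (hb : ∀ q ∈ P, BddAbove (Set.range fun x => ⟪q, x⟫_ℝ - φ x))
    (p : EuclideanSpace ℝ (Fin n)) (hp : p ∈ interior P)
    (hd : DifferentiableAt ℝ (legendre φ) p) (δ : ℝ) (hδ : 0 < δ) :
    ∃ η > 0, ∀ x, δ ≤ ‖x - gradient (legendre φ) p‖ →
      ⟪p, x⟫_ℝ - φ x ≤ legendre φ p - η := by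
  set x0 := gradient (legendre φ) p with hx0
  have h1 := hasGradientAt_iff_isLittleO.1 hd.hasGradientAt
  have h2 := h1.def (half_pos hδ)
  have h3 : ∀ᶠ q in 𝓝 p, q ∈ P := mem_interior_iff_mem_nhds.1 hp
  obtain ⟨r, hr, hball⟩ := Metric.eventually_nhds_iff.1 (h2.and h3)
  refine ⟨(r / 2) * (δ / 2), by positivity, fun x hx => ?_⟩
  have hxpos : 0 < ‖x - x0‖ := lt_of_lt_of_le hδ hx
  set d := ((r / 2) / ‖x - x0‖) • (x - x0) with hdd
  have hnd : ‖d‖ = r / 2 := by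
    rw [hdd, norm_smul, Real.norm_of_nonneg (by positivity)]
    field_simp
  obtain ⟨h4, h5⟩ := @hball (p + d) (by rw [dist_eq_norm]; simp [hnd]; linarith)
  have h6 : ⟪p + d, x⟫_ℝ - φ x ≤ legendre φ (p + d) := le_ciSup (hb _ h5) x
  have h7 := (abs_le.1 (Real.norm_eq_abs _ ▸ h4)).2
  rw [add_sub_cancel_left, hnd] at h7
  have h8 : ⟪d, x⟫_ℝ - ⟪x0, d⟫_ℝ = (r / 2) * ‖x - x0‖ := by
    rw [real_inner_comm d x0, ← inner_sub_right, hdd, real_inner_smul_left,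
      real_inner_self_eq_norm_sq]
    field_simp
  rw [inner_add_left] at h6
  have h9 : (r / 2) * δ ≤ (r / 2) * ‖x - x0‖ := by gcongr
  linarith

open Filter Topology in
theorem aux_env {n : ℕ} (P : Set (EuclideanSpace ℝ (Fin n)))
    (φ v : EuclideanSpace ℝ (Fin n) → ℝ)
    (hb : ∀ t : ℝ, ∀ q ∈ P, BddAbove (Set.range fun x => ⟪q, x⟫_ℝ - (φ x + t * v x)))
    (hv : Continuous v) (M : ℝ) (hM : ∀ x, |v x| ≤ M)
    (p : EuclideanSpace ℝ (Fin n)) (hp : p ∈ interior P)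
    (hd : DifferentiableAt ℝ (legendre φ) p) :
    HasDerivAt (fun t : ℝ => legendre (fun x => φ x + t * v x) p)
      (-v (gradient (legendre φ) p)) 0 := by
  have hb0 : ∀ q ∈ P, BddAbove (Set.range fun x => ⟪q, x⟫_ℝ - φ x) := by
    intro q hq
    simpa using hb 0 q hq
  have hsep := aux_sep P φ hb0 p hp hd
  set x0 := gradient (legendre φ) p with hx0
  rw [hasDerivAt_iff_isLittleO, Asymptotics.isLittleO_iff]
  intro c hc
  obtain ⟨δ, hδ, hδv⟩ := Metric.continuous_iff.1 hv x0 c hc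
  obtain ⟨η, hη, hs⟩ := hsep δ hδ
  have hev : ∀ᶠ t : ℝ in 𝓝 0, |t| * (2 * M) < η := by
    have : Tendsto (fun t : ℝ => |t| * (2 * M)) (𝓝 0) (𝓝 (|0| * (2 * M))) :=
      Continuous.tendsto (by fun_prop) 0
    rw [abs_zero, zero_mul] at this
    exact this.eventually (gt_mem_nhds hη)
  filter_upwards [hev] with t ht
  have hpP := interior_subset hp
  have hnear : ∀ x, ‖x - x0‖ < δ → |t * v x - t * v x0| ≤ |t| * c := by
    intro x hx
    rw [← mul_sub, abs_mul]
    have := hδv x (by rwa [dist_eq_norm])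
    rw [Real.dist_eq] at this
    gcongr
  have htv : ∀ x, |t * v x| ≤ |t| * M := fun x => by
    rw [abs_mul]; gcongr; exact hM x
  have hup : legendre (fun x => φ x + t * v x) p ≤ legendre φ p - t * v x0 + |t| * c := by
    refine ciSup_le fun x => ?_
    rcases lt_or_ge ‖x - x0‖ δ with hx | hx
    · have h1 := (abs_le.1 (hnear x hx)).1
      have h2 : ⟪p, x⟫_ℝ - φ x ≤ legendre φ p := le_ciSup (hb0 p hpP) x
      linarith
    · have h1 := hs x hx
      have h2 := (abs_le.1 (htv x)).1
      have h3 := (abs_le.1 (htv x0)).2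
      have : 0 ≤ |t| * c := by positivity
      linarith
  have hlo : legendre φ p - t * v x0 - |t| * c ≤ legendre (fun x => φ x + t * v x) p := by
    refine le_of_forall_pos_le_add fun ε hε => ?_
    obtain ⟨x, hx⟩ := exists_lt_of_lt_ciSup
      (show legendre φ p - min ε η < ⨆ x, (⟪p, x⟫_ℝ - φ x) from
        sub_lt_self _ (lt_min hε hη))
    have hxd : ‖x - x0‖ < δ := by
      by_contra hcon
      have := hs x (not_lt.1 hcon)
      have := min_le_right ε η
      linarith
    have h1 := (abs_le.1 (hnear x hxd)).2
    have h2 : ⟪p, x⟫_ℝ - (φ x + t * v x) ≤ legendre (fun x => φ x + t * v x) p :=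
      le_ciSup (hb t p hpP) x
    have := min_le_left ε η
    linarith
  have e0 : legendre (fun x => φ x + 0 * v x) p = legendre φ p := by simp
  simp only [e0, sub_zero, smul_eq_mul, Real.norm_eq_abs]
  rw [abs_le]
  constructor <;> linarith

theorem aux_convex {n : ℕ} (P : Set (EuclideanSpace ℝ (Fin n))) (hPconv : Convex ℝ P)
    (φ : EuclideanSpace ℝ (Fin n) → ℝ)
    (hb : ∀ q ∈ P, BddAbove (Set.range fun x => ⟪q, x⟫_ℝ - φ x)) :
    ConvexOn ℝ P (legendre φ) := by
  refine ⟨hPconv, fun p hp q hq a b ha hb' hab => ?_⟩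
  refine ciSup_le fun x => ?_
  have h1 : ⟪p, x⟫_ℝ - φ x ≤ legendre φ p := le_ciSup (hb p hp) x
  have h2 : ⟪q, x⟫_ℝ - φ x ≤ legendre φ q := le_ciSup (hb q hq) x
  rw [inner_add_left, real_inner_smul_left, real_inner_smul_left, smul_eq_mul, smul_eq_mul]
  have h3 := mul_le_mul_of_nonneg_left h1 ha
  have h4 := mul_le_mul_of_nonneg_left h2 hb'
  have h5 : φ x = a * φ x + b * φ x := by rw [← add_mul, hab, one_mul]
  linarith

open Filter Topology in
theorem aux_ae {n : ℕ} (P : Set (EuclideanSpace ℝ (Fin n)))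
    (g : EuclideanSpace ℝ (Fin n) → ℝ) (hg : ConvexOn ℝ P g) :
    ∀ᵐ p, p ∈ interior P → DifferentiableAt ℝ g p := by
  rw [ae_iff]
  refine measure_null_of_locally_null _ fun x hx => ?_
  simp only [Set.mem_setOf_eq, Classical.not_imp] at hx
  obtain ⟨K, t, ht, hK⟩ := hg.locallyLipschitzOn_interior hx.1
  rw [isOpen_interior.nhdsWithin_eq hx.1] at ht
  have h1 := (hK.mono interior_subset).ae_differentiableWithinAt_of_mem (μ := volume)
  refine ⟨_, inter_mem_nhdsWithin _ (interior_mem_nhds.2 ht), ?_⟩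
  refine measure_mono_null ?_ (ae_iff.1 h1)
  rintro y ⟨hy1, hy2⟩ hcon
  simp only [Set.mem_setOf_eq, Classical.not_imp] at hy1
  exact hy1.2 ((hcon hy2).differentiableAt (isOpen_interior.mem_nhds hy2))

/-- Let `φ` be convex with `φ - φ_P` bounded and let `v` be
bounded and continuous. Then `φ*` is differentiable at Lebesgue-a.e. point of
`P`, and `f(t) := ∫_P (φ + t v)* dp` is differentiable at `t = 0` with
`f'(0) = -∫_P v(∇φ*(p)) dp`. -/
theorem statement12 {n : ℕ} (P : Set (EuclideanSpace ℝ (Fin n)))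
    (hPcomp : IsCompact P) (hPconv : Convex ℝ P)
    (h0 : (0 : EuclideanSpace ℝ (Fin n)) ∈ interior P)
    (φ : EuclideanSpace ℝ (Fin n) → ℝ)
    (hφconv : ConvexOn ℝ Set.univ φ)
    (hbd : ∃ C : ℝ, ∀ x, |φ x - suppFn P x| ≤ C)
    (v : EuclideanSpace ℝ (Fin n) → ℝ)
    (hv : Continuous v) (hvb : ∃ M : ℝ, ∀ x, |v x| ≤ M) :
    (∀ᵐ p ∂(volume.restrict P), DifferentiableAt ℝ (legendre φ) p) ∧
    HasDerivAt (fun t : ℝ => ∫ p in P, legendre (fun x => φ x + t * v x) p)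
      (-∫ p in P, v (gradient (legendre φ) p)) 0 := by
  obtain ⟨C, hC⟩ := hbd
  obtain ⟨M, hM⟩ := hvb
  have hsup : ∀ p ∈ P, ∀ x, ⟪p, x⟫_ℝ ≤ suppFn P x := by
    intro p hp x
    have hbdd : BddAbove (Set.range fun q : P => ⟪x, (q : EuclideanSpace ℝ (Fin n))⟫_ℝ) := by
      have := (hPcomp.image (f := fun q => ⟪x, q⟫_ℝ) (by fun_prop)).bddAbove
      rwa [Set.image_eq_range] at this
    rw [real_inner_comm]
    exact le_ciSup hbdd ⟨p, hp⟩
  have hM0 : 0 ≤ M := (abs_nonneg _).trans (hM 0)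
  have hle : ∀ t : ℝ, ∀ p ∈ P, ∀ x, ⟪p, x⟫_ℝ - (φ x + t * v x) ≤ C + |t| * M := by
    intro t p hp x
    have h1 := (abs_le.1 (hC x)).1
    have h2 := hsup p hp x
    have h3 : |t * v x| ≤ |t| * M := by rw [abs_mul]; gcongr; exact hM x
    have h4 := (abs_le.1 h3).1
    linarith
  have hb : ∀ t : ℝ, ∀ p ∈ P, BddAbove (Set.range fun x => ⟪p, x⟫_ℝ - (φ x + t * v x)) := by
    intro t p hp
    exact ⟨C + |t| * M, by rintro _ ⟨x, rfl⟩; exact hle t p hp x⟩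
  have hconv : ∀ t : ℝ, ConvexOn ℝ P (legendre fun x => φ x + t * v x) := fun t =>
    aux_convex P hPconv _ (hb t)
  have hconv0 : ConvexOn ℝ P (legendre φ) := by simpa using hconv 0
  have hint : ∀ᵐ p ∂(volume.restrict P), p ∈ interior P := by
    rw [ae_restrict_iff' hPcomp.isClosed.measurableSet]
    have : ∀ᵐ p, p ∉ frontier P := measure_eq_zero_iff_ae_notMem.1 (hPconv.addHaar_frontier volume)
    filter_upwards [this] with p hp hpP
    by_contra hcon
    exact hp ⟨subset_closure hpP, hcon⟩
  have hdiff : ∀ᵐ p ∂(volume.restrict P), DifferentiableAt ℝ (legendre φ) p := by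
    filter_upwards [hint, ae_restrict_of_ae (aux_ae P _ hconv0)] with p h1 h2
    exact h2 h1
  refine ⟨hdiff, ?_⟩
  have hres : (volume.restrict P) = volume.restrict (interior P) := by
    refine Measure.restrict_congr_set ?_
    have h := (ae_restrict_iff' hPcomp.isClosed.measurableSet).1 hint
    filter_upwards [h] with p hp
    exact propext ⟨hp, fun h => interior_subset h⟩
  have hmeas : ∀ t : ℝ, AEStronglyMeasurable (legendre fun x => φ x + t * v x)
      (volume.restrict P) := by
    intro t
    rw [hres]
    exact (hconv t).continuousOn_interior.aestronglyMeasurable isOpen_interior.measurableSet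
  have : IsFiniteMeasure (volume.restrict P) :=
    isFiniteMeasure_restrict.2 hPcomp.measure_lt_top.ne
  have hmemP : ∀ᵐ p ∂(volume.restrict P), p ∈ P :=
    ae_restrict_mem hPcomp.isClosed.measurableSet
  have hI : Integrable (legendre fun x => φ x + (0:ℝ) * v x) (volume.restrict P) := by
    refine Integrable.of_bound (hmeas 0) (|C| + |φ 0|) ?_
    filter_upwards [hmemP] with p hp
    have h1 : legendre (fun x => φ x + (0:ℝ) * v x) p ≤ C + |(0:ℝ)| * M :=
      ciSup_le (hle 0 p hp)
    have h2 : ⟪p, (0 : EuclideanSpace ℝ (Fin n))⟫_ℝ - (φ 0 + 0 * v 0) ≤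
      legendre (fun x => φ x + (0:ℝ) * v x) p := le_ciSup (hb 0 p hp) 0
    rw [inner_zero_right] at h2
    rw [abs_zero] at h1
    rw [Real.norm_eq_abs, abs_le]
    have := le_abs_self C
    have := le_abs_self (φ 0)
    have := abs_nonneg C
    have := abs_nonneg (φ 0)
    constructor <;> linarith
  have hgm : AEStronglyMeasurable (fun p => -v (gradient (legendre φ) p))
      (volume.restrict P) := by
    have h1 : Measurable (gradient (legendre φ)) :=
      (InnerProductSpace.toDual ℝ (EuclideanSpace ℝ (Fin n))).symm.continuous.measurable.comp
        (measurable_fderiv ℝ (legendre φ))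
    exact (hv.measurable.comp h1).neg.aestronglyMeasurable
  have key := (hasDerivAt_integral_of_dominated_loc_of_lip (μ := volume.restrict P)
    (F := fun (t : ℝ) p => legendre (fun x => φ x + t * v x) p) (x₀ := (0:ℝ))
    (F' := fun p => -v (gradient (legendre φ) p)) (s := Set.univ) (bound := fun _ => M)
    Filter.univ_mem (Filter.Eventually.of_forall hmeas) hI hgm ?_ (integrable_const _) ?_).2
  · rwa [integral_neg] at key
  · filter_upwards [hmemP] with p hp
    have hone : ∀ s t : ℝ, legendre (fun x => φ x + s * v x) p ≤
        legendre (fun x => φ x + t * v x) p + M * |s - t| := by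
      intro s t
      refine ciSup_le fun x => ?_
      have h1 : ⟪p, x⟫_ℝ - (φ x + t * v x) ≤ legendre (fun x => φ x + t * v x) p :=
        le_ciSup (hb t p hp) x
      have h2 : |v x * (s - t)| ≤ M * |s - t| := by rw [abs_mul]; gcongr; exact hM x
      have h3 := (abs_le.1 h2).1
      linarith
    refine LipschitzOnWith.of_dist_le_mul fun s _ t _ => ?_
    rw [Real.dist_eq, Real.dist_eq, Real.coe_nnabs, abs_of_nonneg hM0, abs_le]
    have h1 := hone s t
    have h2 := hone t s
    rw [abs_sub_comm t s] at h2
    constructor <;> linarith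
  · filter_upwards [hint, hdiff] with p h1 h2
    exact aux_env P φ v hb hv M hM p h1 h2
end

section
/- Let P ⊆ ℝⁿ be a convex body containing 0 in its interior, and let u₀, u₁ : P → ℝ be bounded functions. For t ∈ [0,1] define φ_t(x) := sup_{p ∈ P} (⟨p, x⟩ − (1−t)·u₀(p) − t·u₁(p)). Then the function t ↦ log ∫_{ℝⁿ} e^{−φ_t(x)} dx is finite and concave on [0,1]. -/
open scoped InnerProductSpace
open MeasureTheory

section helpers
open scoped ENNReal Pointwise

theorem bm_compact {A B C : Set ℝ} (hA : IsCompact A) (hB : IsCompact B)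
    (hAn : A.Nonempty) (hBn : B.Nonempty) (hC : A + B ⊆ C) :
    volume A + volume B ≤ volume C := by
  obtain ⟨a, haA, ha⟩ := hA.exists_isGreatest hAn
  obtain ⟨b, hbB, hb⟩ := hB.exists_isLeast hBn
  have h1 : volume A = volume ((fun x => b + x) '' A) := by
    rw [Set.image_add_left, measure_preimage_add]
  have h2 : volume B = volume ((fun x => a + x) '' B) := by
    rw [Set.image_add_left, measure_preimage_add]
  have hcB : IsCompact ((fun x => a + x) '' B) := hB.image (by fun_prop)
  rw [h1, h2, ← measure_union₀ hcB.measurableSet.nullMeasurableSet]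
  · apply measure_mono
    refine subset_trans ?_ hC
    rintro _ (⟨x, hx, rfl⟩ | ⟨x, hx, rfl⟩)
    · exact ⟨x, hx, b, hbB, add_comm _ _⟩
    · exact ⟨a, haA, x, hx, rfl⟩
  · refine measure_mono_null (t := {a + b}) ?_ (by simp)
    rintro _ ⟨⟨x, hx, rfl⟩, ⟨y, hy, h⟩⟩
    have := ha hx
    have := hb hy
    simp only [Set.mem_singleton_iff] at *
    linarith

theorem bm_one {A B C : Set ℝ} (hA : MeasurableSet A) (hB : MeasurableSet B)
    (hAn : A.Nonempty) (hBn : B.Nonempty) (hC : A + B ⊆ C) :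
    volume A + volume B ≤ volume C := by
  obtain ⟨a, ha⟩ := hAn
  obtain ⟨b, hb⟩ := hBn
  rw [hA.measure_eq_iSup_isCompact, hB.measure_eq_iSup_isCompact]
  have key : ∀ K, K ⊆ A → IsCompact K → ∀ L, L ⊆ B → IsCompact L →
      volume K + volume L ≤ volume C := by
    intro K hK hKc L hL hLc
    refine le_trans (add_le_add (measure_mono (Set.subset_insert a K))
      (measure_mono (Set.subset_insert b L))) ?_
    apply bm_compact (hKc.insert a) (hLc.insert b) (Set.insert_nonempty _ _) (Set.insert_nonempty _ _)
    refine subset_trans (Set.add_subset_add ?_ ?_) hC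
    · exact Set.insert_subset ha hK
    · exact Set.insert_subset hb hL
  rw [ENNReal.iSup_add]
  refine iSup_le fun K => ?_
  by_cases hK : K ⊆ A <;> by_cases hKc : IsCompact K
  · simp only [hK, hKc, iSup_pos]
    rw [ENNReal.add_iSup]
    refine iSup_le fun L => ?_
    by_cases hL : L ⊆ B <;> by_cases hLc : IsCompact L
    · simpa [hL, hLc] using key K hK hKc L hL hLc
    all_goals
      simp only [hL, hLc, iSup_false, iSup_true, bot_eq_zero, iSup_pos, iSup_neg, not_false_eq_true, ENNReal.iSup_zero]
      simpa using key K hK hKc ∅ (Set.empty_subset _) isCompact_empty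
  all_goals
    simp only [hK, hKc, iSup_false, iSup_true, bot_eq_zero, iSup_pos, iSup_neg, not_false_eq_true, ENNReal.iSup_zero, zero_add]
    refine iSup_le fun L => iSup_le fun hL => iSup_le fun hLc => ?_
    simpa using key ∅ (Set.empty_subset _) isCompact_empty L hL hLc

theorem layer1 {f : ℝ → ℝ≥0∞} (hf : Measurable f) (h1 : ∀ x, f x ≤ 1) :
    ∫⁻ x, f x = ∫⁻ t in Set.Ioo (0:ℝ) 1, volume {x | ENNReal.ofReal t < f x} := by
  have hne : ∀ x, f x ≠ ⊤ := fun x => ((h1 x).trans_lt ENNReal.one_lt_top).ne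
  have e := lintegral_eq_lintegral_meas_lt volume (f := fun x => (f x).toReal)
    (Filter.Eventually.of_forall fun x => ENNReal.toReal_nonneg) hf.ennreal_toReal.aemeasurable
  simp only [ENNReal.ofReal_toReal (hne _)] at e
  rw [e, ← lintegral_indicator measurableSet_Ioi, ← lintegral_indicator measurableSet_Ioo]
  congr 1
  ext t
  by_cases ht : 0 < t
  · have hs : {x | t < (f x).toReal} = {x | ENNReal.ofReal t < f x} := by
      ext x
      simp only [Set.mem_ofPred_eq]
      rw [ENNReal.ofReal_lt_iff_lt_toReal ht.le (hne x)]
    by_cases ht1 : t < 1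
    · simp [Set.indicator, ht, ht1, hs]
    · have : {x | ENNReal.ofReal t < f x} = ∅ := by
        ext x
        simp only [Set.mem_ofPred_eq, Set.mem_empty_iff_false, iff_false, not_lt]
        refine (h1 x).trans ?_
        rw [ENNReal.one_le_ofReal]
        exact not_lt.1 ht1
      simp [Set.indicator, ht, ht1, hs, this]
  · simp [Set.indicator, ht]

theorem plA {a b : ℝ} (ha : 0 < a) (hb : 0 < b) (hab : a + b = 1) {f g h : ℝ → ℝ≥0∞}
    (hf : Measurable f) (hg : Measurable g) (hh : Measurable h)
    (hf1 : ⨆ x, f x = 1) (hg1 : ⨆ x, g x = 1)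
    (H : ∀ x y, f x ^ a * g y ^ b ≤ h (a * x + b * y)) :
    ENNReal.ofReal a * (∫⁻ x, f x) + ENNReal.ofReal b * (∫⁻ x, g x) ≤ ∫⁻ x, h x := by
  have hf1' : ∀ x, f x ≤ 1 := fun x => hf1 ▸ le_iSup f x
  have hg1' : ∀ x, g x ≤ 1 := fun x => hg1 ▸ le_iSup g x
  refine le_trans ?_ (lintegral_mono (fun x => min_le_left (h x) 1))
  rw [layer1 hf hf1', layer1 hg hg1', layer1 (hh.min measurable_const) (fun x => min_le_right _ _),
    ← lintegral_const_mul' _ _ ENNReal.ofReal_ne_top, ← lintegral_const_mul' _ _ ENNReal.ofReal_ne_top]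
  refine (le_lintegral_add _ _).trans ?_
  refine setLIntegral_mono' measurableSet_Ioo fun t ht => ?_
  have hlt : ENNReal.ofReal t < 1 := by simpa using ht.2
  have hpos : 0 < ENNReal.ofReal t := by simpa using ht.1
  have mf : MeasurableSet {x | ENNReal.ofReal t < f x} := measurableSet_lt measurable_const hf
  have mg : MeasurableSet {x | ENNReal.ofReal t < g x} := measurableSet_lt measurable_const hg
  have e1 : ENNReal.ofReal a * volume {x | ENNReal.ofReal t < f x} =
      volume (a • {x | ENNReal.ofReal t < f x}) := by
    rw [Measure.addHaar_smul]; simp [abs_of_pos ha]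
  have e2 : ENNReal.ofReal b * volume {x | ENNReal.ofReal t < g x} =
      volume (b • {x | ENNReal.ofReal t < g x}) := by
    rw [Measure.addHaar_smul]; simp [abs_of_pos hb]
  rw [e1, e2]
  apply bm_one (mf.const_smul_of_ne_zero ha.ne') (mg.const_smul_of_ne_zero hb.ne')
  · apply Set.Nonempty.smul_set
    rw [← hf1] at hlt
    exact lt_iSup_iff.1 hlt
  · apply Set.Nonempty.smul_set
    rw [← hg1] at hlt
    exact lt_iSup_iff.1 hlt
  · rintro _ ⟨_, ⟨x, hx, rfl⟩, _, ⟨y, hy, rfl⟩, rfl⟩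
    simp only [Set.mem_ofPred_eq, smul_eq_mul] at *
    refine lt_min ?_ hlt
    refine lt_of_lt_of_le ?_ (H x y)
    calc ENNReal.ofReal t = ENNReal.ofReal t ^ a * ENNReal.ofReal t ^ b := by
          rw [← ENNReal.rpow_add _ _ hpos.ne' ENNReal.ofReal_ne_top, hab, ENNReal.rpow_one]
      _ < f x ^ a * g y ^ b :=
          ENNReal.mul_lt_mul (ENNReal.rpow_lt_rpow hx ha) (ENNReal.rpow_lt_rpow hy hb)

theorem amgm {a b : ℝ} (ha : 0 < a) (hb : 0 < b) (hab : a + b = 1) (x y : ℝ≥0∞) :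
    x ^ a * y ^ b ≤ ENNReal.ofReal a * x + ENNReal.ofReal b * y := by
  by_cases hx : x = ⊤
  · have : ENNReal.ofReal a ≠ 0 := by simpa using ha
    simp [hx, ENNReal.mul_top this]
  by_cases hy : y = ⊤
  · have : ENNReal.ofReal b ≠ 0 := by simpa using hb
    simp [hy, ENNReal.mul_top this]
  lift x to NNReal using hx
  lift y to NNReal using hy
  have := NNReal.geom_mean_le_arith_mean2_weighted a.toNNReal b.toNNReal x y (by
    rw [← Real.toNNReal_add ha.le hb.le, hab, Real.toNNReal_one])
  rw [Real.coe_toNNReal _ ha.le, Real.coe_toNNReal _ hb.le] at this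
  rw [← ENNReal.coe_rpow_of_nonneg _ ha.le, ← ENNReal.coe_rpow_of_nonneg _ hb.le, ENNReal.ofReal, ENNReal.ofReal]
  exact_mod_cast this

theorem plB {a b : ℝ} (ha : 0 < a) (hb : 0 < b) (hab : a + b = 1) {f g h : ℝ → ℝ≥0∞}
    (hf : Measurable f) (hg : Measurable g) (hh : Measurable h)
    (hf1 : ⨆ x, f x ≠ ⊤) (hg1 : ⨆ x, g x ≠ ⊤)
    (H : ∀ x y, f x ^ a * g y ^ b ≤ h (a * x + b * y)) :
    (∫⁻ x, f x) ^ a * (∫⁻ x, g x) ^ b ≤ ∫⁻ x, h x := by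
  by_cases hf0 : ⨆ x, f x = 0
  · have : ∀ x, f x = 0 := by simpa using hf0
    simp [this, ha]
  by_cases hg0 : ⨆ x, g x = 0
  · have : ∀ x, g x = 0 := by simpa using hg0
    simp [this, hb]
  set F := ⨆ x, f x
  set G := ⨆ x, g x
  have hFi : F⁻¹ ≠ ⊤ := by simpa using hf0
  have hGi : G⁻¹ ≠ ⊤ := by simpa using hg0
  set c := (F⁻¹) ^ a * (G⁻¹) ^ b with hc
  have hFa : (F⁻¹) ^ a ≠ ⊤ := ENNReal.rpow_ne_top_of_nonneg ha.le hFi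
  have hGb : (G⁻¹) ^ b ≠ ⊤ := ENNReal.rpow_ne_top_of_nonneg hb.le hGi
  have hFa0 : (F⁻¹) ^ a ≠ 0 := by simp [ENNReal.rpow_eq_zero_iff, hf1, hFi, ha.le]
  have hGb0 : (G⁻¹) ^ b ≠ 0 := by simp [ENNReal.rpow_eq_zero_iff, hg1, hGi, hb.le]
  have hct : c ≠ ⊤ := ENNReal.mul_ne_top hFa hGb
  have hc0 : c ≠ 0 := mul_ne_zero hFa0 hGb0
  have key := plA ha hb hab (hf.const_mul F⁻¹) (hg.const_mul G⁻¹) (hh.const_mul c)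
    (by rw [← ENNReal.mul_iSup, ENNReal.inv_mul_cancel hf0 hf1])
    (by rw [← ENNReal.mul_iSup, ENNReal.inv_mul_cancel hg0 hg1])
    (fun x y => by
      rw [ENNReal.mul_rpow_of_nonneg _ _ ha.le, ENNReal.mul_rpow_of_nonneg _ _ hb.le]
      calc _ = c * (f x ^ a * g y ^ b) := by rw [hc]; ring
        _ ≤ _ := by gcongr; exact H x y)
  have key2 := (amgm ha hb hab _ _).trans key
  rw [lintegral_const_mul _ hf, lintegral_const_mul _ hg, lintegral_const_mul _ hh,
    ENNReal.mul_rpow_of_nonneg _ _ ha.le, ENNReal.mul_rpow_of_nonneg _ _ hb.le] at key2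
  refine (ENNReal.mul_le_mul_iff_right hc0 hct).1 (le_trans (le_of_eq ?_) key2)
  rw [hc]; ring

theorem trunc_tendsto {f : ℝ → ℝ≥0∞} (hf : Measurable f) :
    Filter.Tendsto (fun N : ℕ => ∫⁻ x, min (f x) N) Filter.atTop (nhds (∫⁻ x, f x)) := by
  apply lintegral_tendsto_of_tendsto_of_monotone
  · exact fun N => (hf.min measurable_const).aemeasurable
  · refine Filter.Eventually.of_forall fun x N M hNM => ?_
    dsimp only
    gcongr
  · refine Filter.Eventually.of_forall fun x => ?_
    have := (tendsto_const_nhds (x := f x)).min ENNReal.tendsto_nat_nhds_top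
    simpa using this

theorem plC {a b : ℝ} (ha : 0 < a) (hb : 0 < b) (hab : a + b = 1) {f g h : ℝ → ℝ≥0∞}
    (hf : Measurable f) (hg : Measurable g) (hh : Measurable h)
    (H : ∀ x y, f x ^ a * g y ^ b ≤ h (a * x + b * y)) :
    (∫⁻ x, f x) ^ a * (∫⁻ x, g x) ^ b ≤ ∫⁻ x, h x := by
  by_cases hf0 : ∫⁻ x, f x = 0
  · simp [hf0, ha]
  by_cases hg0 : ∫⁻ x, g x = 0
  · simp [hg0, hb]
  have t1 := (ENNReal.continuous_rpow_const (y := a)).continuousAt.tendsto.comp (trunc_tendsto hf)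
  have t2 := (ENNReal.continuous_rpow_const (y := b)).continuousAt.tendsto.comp (trunc_tendsto hg)
  have t3 := ENNReal.Tendsto.mul t1 (Or.inl (by simp [ENNReal.rpow_eq_zero_iff, hf0, ha.le, ha.not_gt])) t2
    (Or.inl (by simp [ENNReal.rpow_eq_zero_iff, hg0, hb.le, hb.not_gt]))
  refine le_of_tendsto' t3 fun N => ?_
  refine plB ha hb hab (hf.min measurable_const) (hg.min measurable_const) hh ?_ ?_ ?_
  · exact ne_top_of_le_ne_top (ENNReal.natCast_ne_top N) (iSup_le fun x => min_le_right _ _)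
  · exact ne_top_of_le_ne_top (ENNReal.natCast_ne_top N) (iSup_le fun x => min_le_right _ _)
  · intro x y
    refine le_trans ?_ (H x y)
    gcongr <;> exact min_le_left _ _

theorem plN {a b : ℝ} (ha : 0 < a) (hb : 0 < b) (hab : a + b = 1) (n : ℕ) :
    ∀ {f g h : (Fin n → ℝ) → ℝ≥0∞},
    Measurable f → Measurable g → Measurable h →
    (∀ x y, f x ^ a * g y ^ b ≤ h (a • x + b • y)) →
    (∫⁻ x, f x) ^ a * (∫⁻ x, g x) ^ b ≤ ∫⁻ x, h x := by
  induction n with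
  | zero =>
    intro f g h hf hg hh H
    have := H (@default _ Unique.instInhabited) (@default _ Unique.instInhabited)
    rw [Subsingleton.elim (a • (@default (Fin 0 → ℝ) Unique.instInhabited) + b • (@default _ Unique.instInhabited)) (@default _ Unique.instInhabited)] at this
    rw [lintegral_unique, lintegral_unique, lintegral_unique]
    simpa only [volume_pi, Measure.pi_empty_univ, mul_one] using this
  | succ n ih =>
    intro f g h hf hg hh H
    have e : ∀ k : (Fin (n+1) → ℝ) → ℝ≥0∞, Measurable k →
        ∫⁻ x, k x = ∫⁻ s : ℝ, ∫⁻ z : Fin n → ℝ, k (Fin.cons s z) := by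
      intro k hk
      have mp := (volume_preserving_piFinSuccAbove (fun _ : Fin (n+1) => ℝ) 0).symm
      rw [← mp.lintegral_comp hk, Measure.volume_eq_prod, lintegral_prod]
      · simp [MeasurableEquiv.piFinSuccAbove, Fin.insertNthEquiv]
      · exact (hk.comp (MeasurableEquiv.measurable _)).aemeasurable
    have m : Measurable (fun p : ℝ × (Fin n → ℝ) => (Fin.cons p.1 p.2 : Fin (n+1) → ℝ)) := by
      rw [measurable_pi_iff]
      intro i
      refine Fin.cases ?_ (fun j => ?_) i
      · simpa using measurable_fst
      · simpa [Function.comp_def] using (measurable_pi_apply j).comp measurable_snd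
    rw [e f hf, e g hg, e h hh]
    refine plC ha hb hab (hf.comp m).lintegral_prod_right' (hg.comp m).lintegral_prod_right'
      (hh.comp m).lintegral_prod_right' fun s t => ?_
    refine ih (f := fun z => f (Fin.cons s z)) (g := fun z => g (Fin.cons t z))
      (h := fun z => h (Fin.cons (a * s + b * t) z)) (hf.comp (m.comp (measurable_const.prodMk measurable_id)))
      (hg.comp (m.comp (measurable_const.prodMk measurable_id)))
      (hh.comp (m.comp (measurable_const.prodMk measurable_id))) fun x y => ?_
    refine (H _ _).trans (le_of_eq ?_)
    congr 1
    ext i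
    refine Fin.cases ?_ (fun j => ?_) i <;> simp

theorem plE {a b : ℝ} (ha : 0 < a) (hb : 0 < b) (hab : a + b = 1) {n : ℕ}
    {f g h : EuclideanSpace ℝ (Fin n) → ℝ≥0∞}
    (hf : Measurable f) (hg : Measurable g) (hh : Measurable h)
    (H : ∀ x y, f x ^ a * g y ^ b ≤ h (a • x + b • y)) :
    (∫⁻ x, f x) ^ a * (∫⁻ x, g x) ^ b ≤ ∫⁻ x, h x := by
  have mp := PiLp.volume_preserving_toLp (Fin n)
  rw [← mp.lintegral_comp hf, ← mp.lintegral_comp hg, ← mp.lintegral_comp hh]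
  exact plN ha hb hab n (hf.comp mp.measurable) (hg.comp mp.measurable) (hh.comp mp.measurable)
    (fun x y => H _ _)

theorem exp_norm_integrable {n : ℕ} {ε : ℝ} (hε : 0 < ε) :
    Integrable (fun x : EuclideanSpace ℝ (Fin n) => Real.exp (-(ε * ‖x‖))) := by
  have hi : Integrable (fun x : EuclideanSpace ℝ (Fin n) => (1 + ‖x‖) ^ (-((n + 1 : ℕ) : ℝ))) :=
    integrable_one_add_norm (by simp)
  refine (hi.const_mul (Real.exp ε * (n+1).factorial / ε ^ (n+1))).mono' (by fun_prop) ?_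
  refine Filter.Eventually.of_forall fun x => ?_
  have hx : 0 < 1 + ‖x‖ := by positivity
  have h := Real.pow_div_factorial_le_exp (ε * (1 + ‖x‖)) (by positivity) (n+1)
  rw [Real.norm_of_nonneg (Real.exp_pos _).le, Real.rpow_neg hx.le, Real.rpow_natCast, Real.exp_neg,
    ← div_eq_mul_inv, div_div, le_div_iff₀ (by positivity), inv_mul_le_iff₀ (Real.exp_pos _),
    mul_comm (Real.exp _), mul_right_comm, ← Real.exp_add]
  rw [div_le_iff₀ (by positivity), mul_pow] at h
  convert h using 2
  ring_nf

section phi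
variable {n : ℕ} {P : Set (EuclideanSpace ℝ (Fin n))} {u₀ u₁ : EuclideanSpace ℝ (Fin n) → ℝ} {M : ℝ}

noncomputable def phi (P : Set (EuclideanSpace ℝ (Fin n))) (u₀ u₁ : EuclideanSpace ℝ (Fin n) → ℝ)
    (t : ℝ) (x : EuclideanSpace ℝ (Fin n)) : ℝ :=
  ⨆ p : P, (⟪(p : EuclideanSpace ℝ (Fin n)), x⟫_ℝ
          - (1 - t) * u₀ (p : EuclideanSpace ℝ (Fin n))
          - t * u₁ (p : EuclideanSpace ℝ (Fin n)))

theorem mix_abs (hb0 : ∀ p ∈ P, |u₀ p| ≤ M) (hb1 : ∀ p ∈ P, |u₁ p| ≤ M) {t : ℝ}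
    (ht : t ∈ Set.Icc (0:ℝ) 1) (p : P) :
    |(1 - t) * u₀ p + t * u₁ p| ≤ M := by
  have h0 := abs_le.1 (hb0 p p.2)
  have h1 := abs_le.1 (hb1 p p.2)
  obtain ⟨t0, t1⟩ := ht
  rw [abs_le]
  constructor <;> nlinarith

theorem phi_bdd (hP : IsCompact P) (hb0 : ∀ p ∈ P, |u₀ p| ≤ M) (hb1 : ∀ p ∈ P, |u₁ p| ≤ M) {t : ℝ}
    (ht : t ∈ Set.Icc (0:ℝ) 1) (x : EuclideanSpace ℝ (Fin n)) :
    BddAbove (Set.range fun p : P => (⟪(p : EuclideanSpace ℝ (Fin n)), x⟫_ℝ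
          - (1 - t) * u₀ (p : EuclideanSpace ℝ (Fin n))
          - t * u₁ (p : EuclideanSpace ℝ (Fin n)))) := by
  obtain ⟨R, hR⟩ := hP.isBounded.exists_norm_le
  refine ⟨R * ‖x‖ + M, ?_⟩
  rintro _ ⟨p, rfl⟩
  have h1 := abs_le.1 (mix_abs hb0 hb1 ht p)
  have h2 := real_inner_le_norm (p : EuclideanSpace ℝ (Fin n)) x
  have h3 := mul_le_mul_of_nonneg_right (hR p p.2) (norm_nonneg x)
  dsimp only
  linarith

theorem phi_meas (hP : IsCompact P) (hb0 : ∀ p ∈ P, |u₀ p| ≤ M) (hb1 : ∀ p ∈ P, |u₁ p| ≤ M) {t : ℝ}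
    (ht : t ∈ Set.Icc (0:ℝ) 1) : Measurable (phi P u₀ u₁ t) := by
  apply LowerSemicontinuous.measurable
  apply lowerSemicontinuous_ciSup (phi_bdd hP hb0 hb1 ht)
  intro p
  apply Continuous.lowerSemicontinuous
  fun_prop

theorem phi_lower (hP : IsCompact P) (h0 : (0 : EuclideanSpace ℝ (Fin n)) ∈ interior P)
    (hb0 : ∀ p ∈ P, |u₀ p| ≤ M) (hb1 : ∀ p ∈ P, |u₁ p| ≤ M) :
    ∃ ε > 0, ∀ t ∈ Set.Icc (0:ℝ) 1, ∀ x, ε * ‖x‖ - M ≤ phi P u₀ u₁ t x := by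
  obtain ⟨ε, hε, hball⟩ := Metric.nhds_basis_closedBall.mem_iff.1 (mem_interior_iff_mem_nhds.1 h0)
  refine ⟨ε, hε, fun t ht x => ?_⟩
  have hp : (ε / ‖x‖) • x ∈ P := by
    apply hball
    rw [mem_closedBall_zero_iff, norm_smul, Real.norm_of_nonneg (by positivity)]
    by_cases hx : ‖x‖ = 0
    · simp [hx, hε.le]
    · rw [div_mul_cancel₀ _ hx]
  refine le_trans ?_ (le_ciSup (phi_bdd hP hb0 hb1 ht x) ⟨_, hp⟩)
  have h1 := abs_le.1 (mix_abs hb0 hb1 ht ⟨_, hp⟩)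
  have : ⟪(ε / ‖x‖) • x, x⟫_ℝ = ε * ‖x‖ := by
    rw [real_inner_smul_left, real_inner_self_eq_norm_sq]
    by_cases hx : ‖x‖ = 0
    · simp [hx]
    · field_simp
  dsimp only at h1 ⊢
  rw [this]
  linarith

theorem phi_int (hP : IsCompact P) (h0 : (0 : EuclideanSpace ℝ (Fin n)) ∈ interior P)
    (hb0 : ∀ p ∈ P, |u₀ p| ≤ M) (hb1 : ∀ p ∈ P, |u₁ p| ≤ M) {t : ℝ}
    (ht : t ∈ Set.Icc (0:ℝ) 1) : Integrable (fun x => Real.exp (-phi P u₀ u₁ t x)) := by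
  obtain ⟨ε, hε, h⟩ := phi_lower hP h0 hb0 hb1
  refine ((exp_norm_integrable hε).const_mul (Real.exp M)).mono'
    (phi_meas hP hb0 hb1 ht).neg.exp.aestronglyMeasurable ?_
  refine Filter.Eventually.of_forall fun x => ?_
  rw [Real.norm_of_nonneg (Real.exp_pos _).le, ← Real.exp_add, Real.exp_le_exp]
  linarith [h t ht x]

theorem phi_conv (hP : IsCompact P) (h0 : (0 : EuclideanSpace ℝ (Fin n)) ∈ interior P)
    (hb0 : ∀ p ∈ P, |u₀ p| ≤ M) (hb1 : ∀ p ∈ P, |u₁ p| ≤ M) {s t a b : ℝ}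
    (hs : s ∈ Set.Icc (0:ℝ) 1) (ht : t ∈ Set.Icc (0:ℝ) 1) (ha : 0 < a) (hb : 0 < b) (hab : a + b = 1)
    (x y : EuclideanSpace ℝ (Fin n)) :
    phi P u₀ u₁ (a * s + b * t) (a • x + b • y) ≤ a * phi P u₀ u₁ s x + b * phi P u₀ u₁ t y := by
  have : Nonempty P := ⟨⟨0, interior_subset h0⟩⟩
  refine ciSup_le fun p => ?_
  have h1 := mul_le_mul_of_nonneg_left (le_ciSup (phi_bdd hP hb0 hb1 hs x) p) ha.le
  have h2 := mul_le_mul_of_nonneg_left (le_ciSup (phi_bdd hP hb0 hb1 ht y) p) hb.le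
  refine le_trans (le_of_eq ?_) (add_le_add h1 h2)
  rw [inner_add_right, real_inner_smul_right, real_inner_smul_right]
  linear_combination (-u₀ p) * (-hab)

theorem phi_main (hP : IsCompact P) (h0 : (0 : EuclideanSpace ℝ (Fin n)) ∈ interior P)
    (hb0 : ∀ p ∈ P, |u₀ p| ≤ M) (hb1 : ∀ p ∈ P, |u₁ p| ≤ M) :
    ConcaveOn ℝ (Set.Icc (0:ℝ) 1) (fun t => Real.log (∫ x, Real.exp (-phi P u₀ u₁ t x))) := by
  rw [concaveOn_iff_forall_pos]
  refine ⟨convex_Icc 0 1, fun s hs t ht a b ha hb hab => ?_⟩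
  have hst : a * s + b * t ∈ Set.Icc (0:ℝ) 1 := convex_Icc 0 1 hs ht ha.le hb.le hab
  have pos : ∀ {r : ℝ}, r ∈ Set.Icc (0:ℝ) 1 → 0 < ∫ x, Real.exp (-phi P u₀ u₁ r x) :=
    fun hr => integral_exp_pos (phi_int hP h0 hb0 hb1 hr)
  have lint : ∀ {r : ℝ}, r ∈ Set.Icc (0:ℝ) 1 → ∫⁻ x, ENNReal.ofReal (Real.exp (-phi P u₀ u₁ r x)) =
      ENNReal.ofReal (∫ x, Real.exp (-phi P u₀ u₁ r x)) := fun hr =>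
    (ofReal_integral_eq_lintegral_ofReal (phi_int hP h0 hb0 hb1 hr)
      (Filter.Eventually.of_forall fun x => (Real.exp_pos _).le)).symm
  have meas : ∀ {r : ℝ}, r ∈ Set.Icc (0:ℝ) 1 →
      Measurable fun x => ENNReal.ofReal (Real.exp (-phi P u₀ u₁ r x)) := fun hr =>
    (phi_meas hP hb0 hb1 hr).neg.exp.ennreal_ofReal
  have key := plE ha hb hab (meas hs) (meas ht) (meas hst) (fun x y => by
    rw [ENNReal.ofReal_rpow_of_pos (Real.exp_pos _), ENNReal.ofReal_rpow_of_pos (Real.exp_pos _),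
      ← ENNReal.ofReal_mul (by positivity), ← Real.exp_mul, ← Real.exp_mul, ← Real.exp_add]
    apply ENNReal.ofReal_le_ofReal
    rw [Real.exp_le_exp]
    linarith [phi_conv hP h0 hb0 hb1 hs ht ha hb hab x y])
  rw [lint hs, lint ht, lint hst, ENNReal.ofReal_rpow_of_pos (pos hs),
    ENNReal.ofReal_rpow_of_pos (pos ht), ← ENNReal.ofReal_mul (Real.rpow_nonneg (pos hs).le _),
    ENNReal.ofReal_le_ofReal_iff (pos hst).le] at key
  have pa := Real.rpow_pos_of_pos (pos hs) a
  have pb := Real.rpow_pos_of_pos (pos ht) b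
  have := Real.log_le_log (mul_pos pa pb) key
  rw [Real.log_mul pa.ne' pb.ne', Real.log_rpow (pos hs), Real.log_rpow (pos ht)] at this
  simpa only [smul_eq_mul] using this

end phi

end helpers

/-- For bounded functions `u₀, u₁` on a convex body `P`
containing `0` in its interior, with
`φ_t(x) := sup_{p ∈ P} (⟨p, x⟩ - (1-t)u₀(p) - t u₁(p))`, the function
`t ↦ log ∫ e^{-φ_t} dx` is finite (the integrand is integrable) and concave
on `[0,1]`. -/
theorem statement13 {n : ℕ} (P : Set (EuclideanSpace ℝ (Fin n)))
    (hPcomp : IsCompact P) (hPconv : Convex ℝ P)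
    (h0 : (0 : EuclideanSpace ℝ (Fin n)) ∈ interior P)
    (u₀ u₁ : EuclideanSpace ℝ (Fin n) → ℝ)
    (M : ℝ) (hb0 : ∀ p ∈ P, |u₀ p| ≤ M) (hb1 : ∀ p ∈ P, |u₁ p| ≤ M) :
    (∀ t ∈ Set.Icc (0 : ℝ) 1,
      Integrable (fun x => Real.exp (-(⨆ p : P,
        (⟪(p : EuclideanSpace ℝ (Fin n)), x⟫_ℝ
          - (1 - t) * u₀ (p : EuclideanSpace ℝ (Fin n))
          - t * u₁ (p : EuclideanSpace ℝ (Fin n))))))) ∧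
    ConcaveOn ℝ (Set.Icc (0 : ℝ) 1) (fun t =>
      Real.log (∫ x, Real.exp (-(⨆ p : P,
        (⟪(p : EuclideanSpace ℝ (Fin n)), x⟫_ℝ
          - (1 - t) * u₀ (p : EuclideanSpace ℝ (Fin n))
          - t * u₁ (p : EuclideanSpace ℝ (Fin n))))))) := by
  exact ⟨fun t ht => phi_int hPcomp h0 hb0 hb1 ht, phi_main hPcomp h0 hb0 hb1⟩
end

section
/- Let P ⊆ ℝⁿ be a convex body containing 0 in its interior. For every δ ∈ (0,1) there exists a constant C_δ such that for every convex function φ : ℝⁿ → ℝ with φ − φ_P bounded on ℝⁿ, φ ≥ 0 everywhere and φ(0) = 0, the inequality log ∫_{ℝⁿ} e^{−φ(x)} dx ≤ (δ / vol(P)) · ∫_P φ*(p) dp + C_δ holds, where vol(P) denotes the Lebesgue measure of P. -/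
open scoped InnerProductSpace
open MeasureTheory

lemma aux_int {n : ℕ} (c : ℝ) (hc : 0 < c) :
    Integrable (fun x : EuclideanSpace ℝ (Fin n) => Real.exp (-(c * ‖x‖))) := by
  have h := integrable_one_add_norm (E := EuclideanSpace ℝ (Fin n)) (μ := volume)
    (r := ((n + 1 : ℕ) : ℝ)) (by simp)
  set d := min c 1 with hd
  have hd0 : 0 < d := by positivity
  refine (h.const_mul (Real.exp d * ((n+1).factorial / d ^ (n+1)))).mono'
    (by fun_prop) (Filter.Eventually.of_forall fun x => ?_)
  have hx := norm_nonneg x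
  rw [Real.norm_eq_abs, abs_of_pos (Real.exp_pos _), Real.rpow_neg (by positivity),
    Real.rpow_natCast]
  have h1 := Real.pow_div_factorial_le_exp (d * (1 + ‖x‖)) (by positivity) (n+1)
  have h2 : Real.exp (-(c * ‖x‖)) ≤ Real.exp d * Real.exp (-(d * (1 + ‖x‖))) := by
    rw [← Real.exp_add]
    apply Real.exp_le_exp.2
    nlinarith [mul_le_mul_of_nonneg_right (min_le_left c 1) hx]
  refine h2.trans ?_
  rw [mul_assoc]
  refine mul_le_mul_of_nonneg_left ?_ (Real.exp_pos _).le
  rw [Real.exp_neg]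
  refine (inv_anti₀ (by positivity) h1).trans (le_of_eq ?_)
  rw [mul_pow]
  field_simp

theorem statement14 {n : ℕ} (P : Set (EuclideanSpace ℝ (Fin n)))
    (hPcomp : IsCompact P) (hPconv : Convex ℝ P)
    (h0 : (0 : EuclideanSpace ℝ (Fin n)) ∈ interior P) :
    ∀ δ ∈ Set.Ioo (0 : ℝ) 1, ∃ C : ℝ,
      ∀ φ : EuclideanSpace ℝ (Fin n) → ℝ, ConvexOn ℝ Set.univ φ →
        (∃ M : ℝ, ∀ x, |φ x - suppFn P x| ≤ M) →
        (∀ x, 0 ≤ φ x) → φ 0 = 0 →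
        Real.log (∫ x, Real.exp (-φ x)) ≤
          δ / (volume P).toReal * (∫ p in P, legendre φ p) + C := by
  intro δ hδ
  obtain ⟨ε, hε, hball⟩ := Metric.mem_nhds_iff.1 (mem_interior_iff_mem_nhds.1 h0)
  obtain ⟨r, hr⟩ : ∃ r, r = ε / 3 := ⟨_, rfl⟩
  have hr0 : 0 < r := by rw [hr]; positivity
  set v := (volume (Metric.ball (0 : EuclideanSpace ℝ (Fin n)) r)).toReal with hv
  set V := (volume P).toReal with hV
  have hv0 : 0 < v := ENNReal.toReal_pos (Metric.measure_ball_pos _ _ hr0).ne'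
    measure_ball_lt_top.ne
  have hvV : v ≤ V := ENNReal.toReal_mono hPcomp.measure_lt_top.ne
    (measure_mono ((Metric.ball_subset_ball (by linarith)).trans hball))
  have hV0 : 0 < V := hv0.trans_le hvV
  set θ := δ * v / V with hθ
  have hθ0 : 0 < θ := by have := hδ.1; positivity
  have hθ1 : θ ≤ 1 := by
    rw [hθ, div_le_one hV0]
    nlinarith [hδ.2, hδ.1]
  set K := ∫ x : EuclideanSpace ℝ (Fin n), Real.exp (-(θ * r * ‖x‖)) with hK
  refine ⟨max 0 (Real.log K), ?_⟩
  rintro φ - ⟨M, hM⟩ hφ hφ0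
  have hsupp : ∀ p ∈ P, ∀ x, ⟪x, p⟫_ℝ ≤ suppFn P x := by
    intro p hp x
    have hb : BddAbove (Set.range fun p : P => ⟪x, (p : EuclideanSpace ℝ (Fin n))⟫_ℝ) := by
      obtain ⟨R, hR⟩ := hPcomp.isBounded.exists_norm_le
      refine ⟨‖x‖ * R, ?_⟩
      rintro _ ⟨q, rfl⟩
      exact (real_inner_le_norm _ _).trans
        (mul_le_mul_of_nonneg_left (hR q q.2) (norm_nonneg _))
    exact le_ciSup hb ⟨p, hp⟩
  have hub : ∀ p ∈ P, ∀ x, ⟪p, x⟫_ℝ - φ x ≤ M := by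
    intro p hp x
    have h1 := hsupp p hp x
    have h2 := (abs_le.1 (hM x)).1
    rw [real_inner_comm]
    linarith
  have hbdd : ∀ p ∈ P, BddAbove (Set.range fun x => ⟪p, x⟫_ℝ - φ x) := by
    rintro p hp
    refine ⟨M, ?_⟩
    rintro _ ⟨x, rfl⟩
    exact hub p hp x
  have hle : ∀ p ∈ P, ∀ x, ⟪p, x⟫_ℝ - φ x ≤ legendre φ p := fun p hp x =>
    le_ciSup (hbdd p hp) x
  have hnn : ∀ p ∈ P, 0 ≤ legendre φ p := fun p hp => by
    simpa [hφ0] using hle p hp 0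
  have hleM : ∀ p ∈ P, legendre φ p ≤ M := fun p hp => ciSup_le (hub p hp)
  have hPm : MeasurableSet P := hPcomp.measurableSet
  have hlsc : LowerSemicontinuous (fun p : P => legendre φ p) := by
    apply lowerSemicontinuous_ciSup (fun p : P => hbdd p p.2)
    intro x
    apply Continuous.lowerSemicontinuous
    fun_prop
  have hmeas : AEMeasurable (legendre φ) (volume.restrict P) :=
    aemeasurable_restrict_of_measurable_subtype hPm hlsc.measurable
  have hint : IntegrableOn (legendre φ) P := by
    refine Integrable.mono' (integrableOn_const (C := M) hPcomp.measure_lt_top.ne)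
      hmeas.aestronglyMeasurable ?_
    filter_upwards [ae_restrict_mem hPm] with p hp
    rw [Real.norm_eq_abs, abs_of_nonneg (hnn p hp)]
    exact hleM p hp
  set I := ∫ p in P, legendre φ p with hI
  have hI0 : 0 ≤ I := setIntegral_nonneg hPm hnn
  have key : ∀ x, r * ‖x‖ - I / v ≤ φ x := by
    intro x
    rcases eq_or_ne x 0 with rfl | hx
    · have : 0 ≤ I / v := by positivity
      simp [hφ0, this]
    have hx0 : 0 < ‖x‖ := norm_pos_iff.2 hx
    set c := (2 * r / ‖x‖) • x with hc
    have hcn : ‖c‖ = 2 * r := by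
      rw [hc, norm_smul, Real.norm_eq_abs, abs_of_pos (by positivity)]
      field_simp
    have hS : Metric.ball c r ⊆ P := by
      refine fun p hp => hball ?_
      rw [mem_ball_iff_norm] at hp
      rw [mem_ball_zero_iff]
      have := norm_add_le (p - c) c
      rw [sub_add_cancel] at this
      linarith
    have hvol : volume.real (Metric.ball c r) = v := by
      rw [hv, Measure.real, Measure.addHaar_ball_center]
    have hlow : ∀ p ∈ Metric.ball c r, r * ‖x‖ - φ x ≤ legendre φ p := by
      intro p hp
      refine le_trans ?_ (hle p (hS hp) x)
      rw [mem_ball_iff_norm] at hp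
      have h1 : ⟪p, x⟫_ℝ = ⟪c, x⟫_ℝ + ⟪p - c, x⟫_ℝ := by
        rw [← inner_add_left]; simp
      have h2 : ⟪c, x⟫_ℝ = 2 * r * ‖x‖ := by
        rw [hc, real_inner_smul_left, real_inner_self_eq_norm_sq]
        field_simp
      have h3 := (abs_le.1 (abs_real_inner_le_norm (p - c) x)).1
      nlinarith
    have h4 : (r * ‖x‖ - φ x) * v ≤ I := by
      calc (r * ‖x‖ - φ x) * v = ∫ p in Metric.ball c r, (r * ‖x‖ - φ x) := by
            rw [setIntegral_const, hvol, smul_eq_mul, mul_comm]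
        _ ≤ ∫ p in Metric.ball c r, legendre φ p :=
            setIntegral_mono_on (integrableOn_const measure_ball_lt_top.ne)
              (hint.mono_set hS) measurableSet_ball hlow
        _ ≤ I := setIntegral_mono_set hint
            ((ae_restrict_mem hPm).mono hnn) (Filter.Eventually.of_forall hS)
    rw [← le_div_iff₀ hv0] at h4
    linarith
  have hθI : θ * (I / v) = δ / V * I := by rw [hθ]; field_simp
  have hmain : ∫ x, Real.exp (-φ x) ≤ Real.exp (δ / V * I) * K := by
    rw [hK, ← integral_const_mul]
    refine integral_mono_of_nonneg (Filter.Eventually.of_forall fun x => (Real.exp_pos _).le)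
      ((aux_int (θ * r) (by positivity)).const_mul _) (Filter.Eventually.of_forall fun x => ?_)
    simp only
    rw [← Real.exp_add, ← hθI]
    apply Real.exp_le_exp.2
    have h1 := mul_le_mul_of_nonneg_left (key x) hθ0.le
    have h2 := mul_le_mul_of_nonneg_right hθ1 (hφ x)
    linarith
  have hnI : 0 ≤ ∫ x, Real.exp (-φ x) := integral_nonneg fun x => (Real.exp_pos _).le
  have hRI : 0 ≤ δ / V * I := by have := hδ.1; positivity
  rcases hnI.eq_or_lt with h | h
  · rw [← h, Real.log_zero]
    have := le_max_left 0 (Real.log K)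
    linarith
  · have hKpos : 0 < K := by
      have := h.trans_le hmain
      exact (pos_iff_pos_of_mul_pos this).1 (Real.exp_pos _)
    have h1 := Real.log_le_log h hmain
    rw [Real.log_mul (Real.exp_pos _).ne' hKpos.ne', Real.log_exp] at h1
    have := le_max_right 0 (Real.log K)
    linarith
end
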